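/- Let d ∈ ℕ with d ≥ 4 and let (c_n) be a sequence of real numbers with c_n ≥ (1 + 2^(d+5)/log₂ n)^(1/d) for every n ≥ 2 (and c_1 ≥ 1). Then a random sequence (S_n) in the probability space 𝒢_{(c_n)} almost surely satisfies limsup_{n→∞} F_n(S_n)·(log₂ n)^(−1) < ∞; that is, ℙ[ limsup_{n→∞} F_n(S_n)/(log₂ n) < ∞ ] = 1. -/

import Mathlib

open MeasureTheory

/-- Euclidean distance between two points of the integer lattice `ℤ^d`. -/
noncomputable def zdist {d : ℕ} (x y : Fin d → ℤ) : ℝ :=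
  Real.sqrt (∑ i, ((x i : ℝ) - (y i : ℝ)) ^ 2)

/-- The grid `{1,…,n}^d` as a finset of `ℤ^d`. -/
noncomputable def grid (d n : ℕ) : Finset (Fin d → ℤ) :=
  Fintype.piFinset fun _ => Finset.Icc 1 (n : ℤ)

/-- `F_n(S)`: the least Lipschitz constant (Euclidean metric) of a surjection of `S`
onto the grid `{1,…,n}^d`. -/
noncomputable def Fleast (d n : ℕ) (S : Finset (Fin d → ℤ)) : ℝ :=
  sInf {L : ℝ | ∃ f : (Fin d → ℤ) → (Fin d → ℤ),
    (∀ x ∈ S, f x ∈ grid d n) ∧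
    (∀ y ∈ grid d n, ∃ x ∈ S, f x = y) ∧
    (∀ x ∈ S, ∀ y ∈ S, zdist (f x) (f y) ≤ L * zdist x y)}

/-- The grid `{1,…,m}^d` (with `m : ℤ`), as a finite type. -/
abbrev gridPt (d : ℕ) (m : ℤ) : Type := Fin d → (Finset.Icc (1 : ℤ) m : Finset ℤ)

/-- The space of configurations of `N` points inside the grid `{1,…,m}^d`. -/
abbrev Config (d : ℕ) (m : ℤ) (N : ℕ) : Type := {S : Finset (gridPt d m) // S.card = N}

/-- A configuration in `gridPt d m`, regarded as a finset of the integer lattice. -/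
def toLattice {d : ℕ} {m : ℤ} (S : Finset (gridPt d m)) : Finset (Fin d → ℤ) :=
  S.image fun x i => (x i : ℤ)

instance (d : ℕ) (m : ℤ) (N : ℕ) : MeasurableSpace (Config d m N) := ⊤


lemma choose_bd1 (M N : ℕ) (hNM : N ≤ M) (hM : 0 < M) (j : ℕ) (hj : j ≤ N) :
    ((M - j).choose (N - j) : ℝ) ≤ (M.choose N : ℝ) * ((N : ℝ) / M) ^ j := by
  induction j with
  | zero => simp
  | succ j ih =>
    have ih := ih (by omega)
    obtain ⟨n, hn⟩ : ∃ n, M = n + 1 + j := ⟨M - 1 - j, by omega⟩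
    obtain ⟨k, hk⟩ : ∃ k, N = k + 1 + j := ⟨N - 1 - j, by omega⟩
    have e1 : M - j = n + 1 := by omega
    have e2 : N - j = k + 1 := by omega
    have e3 : M - (j + 1) = n := by omega
    have e4 : N - (j + 1) = k := by omega
    rw [e1, e2] at ih
    rw [e3, e4]
    have h := Nat.add_one_mul_choose_eq n k
    have h' : ((n : ℝ) + 1) * (n.choose k : ℝ) = ((n + 1).choose (k + 1) : ℝ) * (k + 1) := by
      exact_mod_cast h
    have hn0 : (0 : ℝ) < n + 1 := by positivity
    have h2 : (n.choose k : ℝ) = ((n + 1).choose (k + 1) : ℝ) * ((k + 1) / (n + 1)) := by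
      field_simp; linarith
    have h3 : ((k : ℝ) + 1) / (n + 1) ≤ (N : ℝ) / M := by
      rw [div_le_div_iff₀ hn0 (by exact_mod_cast hM)]
      have : (k : ℝ) ≤ n := by exact_mod_cast (by omega : k ≤ n)
      subst hn hk
      push_cast
      nlinarith [Nat.cast_nonneg (α := ℝ) j]
    rw [h2, pow_succ, ← mul_assoc]
    gcongr

lemma choose_bd2 (M N : ℕ) (hNM : N ≤ M) (hM : 0 < M) (j : ℕ) (hj : j ≤ M) :
    ((M - j).choose N : ℝ) ≤ (M.choose N : ℝ) * (1 - (N : ℝ) / M) ^ j := by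
  have hp : (0 : ℝ) ≤ 1 - (N : ℝ) / M := by
    rw [sub_nonneg, div_le_one (by exact_mod_cast hM)]; exact_mod_cast hNM
  induction j with
  | zero => simp
  | succ j ih =>
    have ih := ih (by omega)
    by_cases hc : M - (j + 1) < N
    · rw [Nat.choose_eq_zero_of_lt hc]
      simp only [Nat.cast_zero]
      positivity
    obtain ⟨n, hn⟩ : ∃ n, M = n + 1 + j := ⟨M - 1 - j, by omega⟩
    have e1 : M - j = n + 1 := by omega
    have e3 : M - (j + 1) = n := by omega
    rw [e1] at ih
    rw [e3]
    have h := Nat.choose_mul_succ_eq n N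
    have h' : (n.choose N : ℝ) * ((n : ℝ) + 1) = ((n + 1).choose N : ℝ) * (n + 1 - N) := by
      have : ((n + 1 - N : ℕ) : ℝ) = (n : ℝ) + 1 - N := by
        rw [Nat.cast_sub (by omega)]; push_cast; ring
      rw [← this]
      exact_mod_cast h
    have hn0 : (0 : ℝ) < n + 1 := by positivity
    have h2 : (n.choose N : ℝ) = ((n + 1).choose N : ℝ) * (1 - N / (n + 1)) := by
      field_simp; linarith
    have h3 : (1 : ℝ) - N / (n + 1) ≤ 1 - (N : ℝ) / M := by
      have : (N : ℝ) / M ≤ N / (n + 1) := by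
        apply div_le_div_of_nonneg_left (by positivity) hn0
        subst hn; push_cast; linarith [Nat.cast_nonneg (α := ℝ) j]
      linarith
    have h4 : (0 : ℝ) ≤ 1 - N / (n + 1) := by
      rw [sub_nonneg, div_le_one hn0]
      exact_mod_cast (by omega : N ≤ n + 1)
    rw [h2, pow_succ, ← mul_assoc]
    gcongr

open Finset in
lemma mgf_up {Ω : Type*} [Fintype Ω] [DecidableEq Ω] (B : Finset Ω) (N : ℕ)
    (hN : N ≤ Fintype.card Ω) (hM : 0 < Fintype.card Ω) (u : ℝ) (hu : 0 ≤ u) :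
    ∑ S ∈ powersetCard N (univ : Finset Ω), (1 + u) ^ (#(S ∩ B)) ≤
      ((Fintype.card Ω).choose N : ℝ) * (1 + u * ((N : ℝ) / Fintype.card Ω)) ^ #B := by
  set M := Fintype.card Ω with hMdef
  have key : ∀ S : Finset Ω, (1 + u) ^ (#(S ∩ B)) =
      ∑ U ∈ B.powerset, if U ⊆ S then u ^ #U else 0 := by
    intro S
    rw [← sum_filter, add_comm, ← Finset.sum_pow_mul_eq_add_pow]
    apply sum_congr
    · ext U; rw [mem_filter, mem_powerset, mem_powerset, subset_inter_iff, and_comm]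
    · intros; simp
  simp_rw [key]
  rw [sum_comm]
  have hcount : ∀ U ∈ B.powerset, (∑ S ∈ powersetCard N (univ : Finset Ω),
      if U ⊆ S then u ^ #U else 0) ≤ (M.choose N : ℝ) * (u * ((N : ℝ) / M)) ^ #U := by
    intro U _
    rw [← sum_filter, sum_const, nsmul_eq_mul, mul_pow]
    have : (#(filter (fun S => U ⊆ S) (powersetCard N (univ : Finset Ω))) : ℝ) ≤
        (M.choose N : ℝ) * ((N : ℝ) / M) ^ #U := by
      by_cases hU : #U ≤ N
      · refine le_trans ?_ (choose_bd1 M N hN hM _ hU)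
        rw [Finset.card_filter_powersetCard_subset U univ N (subset_univ U) hU, card_univ]
      · have : filter (fun S => U ⊆ S) (powersetCard N (univ : Finset Ω)) = ∅ := by
          rw [filter_eq_empty_iff]
          intro S hS hUS
          have := card_le_card hUS
          simp at hS
          omega
        rw [this]; simp only [card_empty, Nat.cast_zero]; positivity
    calc _ ≤ (M.choose N : ℝ) * ((N : ℝ) / M) ^ #U * u ^ #U := by gcongr
      _ = _ := by ring
  refine (sum_le_sum hcount).trans ?_
  rw [← mul_sum, add_comm (1 : ℝ), ← Finset.sum_pow_mul_eq_add_pow]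
  simp

open Finset in
lemma mgf_low {Ω : Type*} [Fintype Ω] [DecidableEq Ω] (B : Finset Ω) (N : ℕ)
    (hN : N ≤ Fintype.card Ω) (hM : 0 < Fintype.card Ω) (u : ℝ) (hu : 0 ≤ u) (hu1 : u ≤ 1) :
    ∑ S ∈ powersetCard N (univ : Finset Ω), (1 - u) ^ (#(S ∩ B)) ≤
      ((Fintype.card Ω).choose N : ℝ) * (1 - u * ((N : ℝ) / Fintype.card Ω)) ^ #B := by
  set M := Fintype.card Ω with hMdef
  have key : ∀ S : Finset Ω, (1 - u) ^ (#(S ∩ B)) =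
      ∑ U ∈ B.powerset, if Disjoint U S then u ^ #U * (1 - u) ^ (#B - #U) else 0 := by
    intro S
    rw [← sum_filter]
    have h1 : filter (fun U => Disjoint U S) B.powerset = (B \ S).powerset := by
      ext U; simp [subset_sdiff]
    rw [h1]
    have h2 : ∀ U ∈ (B \ S).powerset, u ^ #U * (1 - u) ^ (#B - #U) =
        (u ^ #U * (1 - u) ^ (#(B \ S) - #U)) * (1 - u) ^ #(S ∩ B) := by
      intro U hU
      have h3 := card_le_card (mem_powerset.1 hU)
      have h4 := card_sdiff_add_card_inter B S
      rw [inter_comm] at h4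
      have : #B - #U = (#(B \ S) - #U) + #(S ∩ B) := by omega
      rw [this, pow_add]; ring
    rw [sum_congr rfl h2, ← sum_mul, Finset.sum_pow_mul_eq_add_pow]
    simp
  simp_rw [key]
  rw [sum_comm]
  have hcount : ∀ U ∈ B.powerset, (∑ S ∈ powersetCard N (univ : Finset Ω),
      if Disjoint U S then u ^ #U * (1 - u) ^ (#B - #U) else 0) ≤
      (M.choose N : ℝ) * ((u * (1 - (N : ℝ) / M)) ^ #U * (1 - u) ^ (#B - #U)) := by
    intro U _
    rw [← sum_filter, sum_const, nsmul_eq_mul, mul_pow]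
    have : (#(filter (fun S => Disjoint U S) (powersetCard N (univ : Finset Ω))) : ℝ) ≤
        (M.choose N : ℝ) * (1 - (N : ℝ) / M) ^ #U := by
      refine le_trans ?_ (choose_bd2 M N hN hM _ (card_le_univ U))
      have : #(powersetCard N Uᶜ) = (M - #U).choose N := by
        rw [card_powersetCard, card_compl]
      rw [← this]
      norm_cast
      apply card_le_card
      intro S hS
      simp only [mem_filter, mem_powersetCard_univ] at hS
      simp only [mem_powersetCard]
      exact ⟨le_compl_iff_disjoint_left.2 hS.2, hS.1⟩
    have h1u : 0 ≤ 1 - u := by linarith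
    calc _ ≤ (M.choose N : ℝ) * (1 - (N : ℝ) / M) ^ #U * (u ^ #U * (1 - u) ^ (#B - #U)) := by gcongr
      _ = _ := by ring
  refine (sum_le_sum hcount).trans ?_
  rw [← mul_sum, Finset.sum_pow_mul_eq_add_pow]
  apply le_of_eq
  ring

open Finset in
lemma tail_up {Ω : Type*} [Fintype Ω] [DecidableEq Ω] (B : Finset Ω) (N : ℕ)
    (hN : N ≤ Fintype.card Ω) (hM : 0 < Fintype.card Ω) (δ m : ℝ) (hδ : 0 ≤ δ) (hδ1 : δ ≤ 1)
    (hm : m = #B * ((N : ℝ) / Fintype.card Ω)) :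
    (#{S ∈ powersetCard N (univ : Finset Ω) | m + δ * m < #(S ∩ B)} : ℝ) ≤
      ((Fintype.card Ω).choose N : ℝ) * Real.exp (-(δ ^ 2 * m / 8)) := by
  have hm0 : 0 ≤ m := by rw [hm]; positivity
  set u := δ / 4 with hu
  have hu0 : 0 ≤ u := by positivity
  have h1 := mgf_up B N hN hM u hu0
  have h2 : (1 + u * ((N : ℝ) / Fintype.card Ω)) ^ #B ≤ Real.exp (u * m) := by
    have := Real.add_one_le_exp (u * ((N : ℝ) / Fintype.card Ω))
    calc _ ≤ (Real.exp (u * ((N : ℝ) / Fintype.card Ω))) ^ #B := by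
          gcongr; linarith
      _ = _ := by rw [← Real.exp_nat_mul, hm]; ring_nf
  have hlog : u - u ^ 2 ≤ Real.log (1 + u) := by
    have := Real.one_sub_inv_le_log_of_pos (show 0 < 1 + u by linarith)
    refine le_trans ?_ this
    have h0 : (0 : ℝ) < 1 + u := by linarith
    have : 1 - (1 + u)⁻¹ = u / (1 + u) := by field_simp; ring
    rw [this, le_div_iff₀ h0]
    nlinarith [pow_nonneg hu0 3]
  have h3 : (#{S ∈ powersetCard N (univ : Finset Ω) | m + δ * m < #(S ∩ B)} : ℝ) *
      Real.exp ((m + δ * m) * (u - u ^ 2)) ≤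
      ∑ S ∈ powersetCard N (univ : Finset Ω), (1 + u) ^ (#(S ∩ B)) := by
    rw [← nsmul_eq_mul, ← sum_const]
    refine le_trans ?_ (sum_le_sum_of_subset_of_nonneg (filter_subset (fun S => m + δ * m < #(S ∩ B)) _) ?_)
    · apply sum_le_sum
      intro S hS
      have hS := (mem_filter.1 hS).2
      have : (1 + u) ^ (#(S ∩ B)) = Real.exp (#(S ∩ B) * Real.log (1 + u)) := by
        rw [Real.exp_nat_mul, Real.exp_log (by linarith)]
      rw [this, Real.exp_le_exp]
      have : 0 ≤ u - u ^ 2 := by nlinarith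
      calc _ ≤ (#(S ∩ B) : ℝ) * (u - u ^ 2) := by gcongr
        _ ≤ _ := by gcongr
    · intros; positivity
  have h4 : (#{S ∈ powersetCard N (univ : Finset Ω) | m + δ * m < #(S ∩ B)} : ℝ) *
      Real.exp ((m + δ * m) * (u - u ^ 2)) ≤
      ((Fintype.card Ω).choose N : ℝ) * Real.exp (u * m) :=
    h3.trans (h1.trans (by gcongr))
  have h5 : Real.exp (u * m) ≤ Real.exp (-(δ ^ 2 * m / 8)) * Real.exp ((m + δ * m) * (u - u ^ 2)) := by
    rw [← Real.exp_add, Real.exp_le_exp]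
    have : -(δ ^ 2 * m / 8) + (m + δ * m) * (u - u ^ 2) - u * m = m * (δ * u - u^2 - δ * u ^ 2 - δ ^ 2 / 8) := by ring
    have h6 : 0 ≤ δ * u - u^2 - δ * u ^ 2 - δ ^ 2 / 8 := by
      have : δ * u - u^2 - δ * u ^ 2 - δ ^ 2 / 8 = δ ^ 2 * (1 - δ) / 16 := by rw [hu]; ring
      rw [this]
      have : 0 ≤ 1 - δ := by linarith
      positivity
    have := mul_nonneg hm0 h6
    linarith
  have hpos := Real.exp_pos ((m + δ * m) * (u - u ^ 2))
  refine le_of_mul_le_mul_right (h4.trans ?_) hpos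
  rw [mul_assoc]
  gcongr

open Finset in
lemma tail_low {Ω : Type*} [Fintype Ω] [DecidableEq Ω] (B : Finset Ω) (N : ℕ)
    (hN : N ≤ Fintype.card Ω) (hM : 0 < Fintype.card Ω) (δ m : ℝ) (hδ : 0 ≤ δ) (hδ1 : δ ≤ 1)
    (hm : m = #B * ((N : ℝ) / Fintype.card Ω)) :
    (#{S ∈ powersetCard N (univ : Finset Ω) | (#(S ∩ B) : ℝ) < m - δ * m} : ℝ) ≤
      ((Fintype.card Ω).choose N : ℝ) * Real.exp (-(δ ^ 2 * m / 8)) := by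
  have hm0 : 0 ≤ m := by rw [hm]; positivity
  set u := δ / 4 with hu
  have hu0 : 0 ≤ u := by positivity
  have hu1 : u ≤ 1 / 4 := by linarith
  have h1 := mgf_low B N hN hM u hu0 (by linarith)
  have hp1 : (N : ℝ) / Fintype.card Ω ≤ 1 := by
    rw [div_le_one (by exact_mod_cast hM)]; exact_mod_cast hN
  have h2 : (1 - u * ((N : ℝ) / Fintype.card Ω)) ^ #B ≤ Real.exp (- (u * m)) := by
    have := Real.add_one_le_exp (-(u * ((N : ℝ) / Fintype.card Ω)))
    have h0 : 0 ≤ (1 - u * ((N : ℝ) / Fintype.card Ω)) := by nlinarith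
    calc _ ≤ (Real.exp (-(u * ((N : ℝ) / Fintype.card Ω)))) ^ #B := by
          gcongr; linarith
      _ = _ := by rw [← Real.exp_nat_mul, hm]; ring_nf
  have hlog : -u - 2 * u ^ 2 ≤ Real.log (1 - u) := by
    have := Real.one_sub_inv_le_log_of_pos (show 0 < 1 - u by linarith)
    refine le_trans ?_ this
    have h0 : (0 : ℝ) < 1 - u := by linarith
    have : 1 - (1 - u)⁻¹ = (-u) / (1 - u) := by field_simp; ring
    rw [this, le_div_iff₀ h0]
    nlinarith [pow_nonneg hu0 2]
  have hlog0 : Real.log (1 - u) ≤ 0 := Real.log_nonpos (by linarith) (by linarith)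
  have h3 : (#{S ∈ powersetCard N (univ : Finset Ω) | (#(S ∩ B) : ℝ) < m - δ * m} : ℝ) *
      Real.exp ((m - δ * m) * (-u - 2 * u ^ 2)) ≤
      ∑ S ∈ powersetCard N (univ : Finset Ω), (1 - u) ^ (#(S ∩ B)) := by
    rw [← nsmul_eq_mul, ← sum_const]
    have h1u : 0 < 1 - u := by linarith
    refine le_trans ?_ (sum_le_sum_of_subset_of_nonneg (filter_subset (fun S => (#(S ∩ B) : ℝ) < m - δ * m) _) ?_)
    · apply sum_le_sum
      intro S hS
      have hS := (mem_filter.1 hS).2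
      have : (1 - u) ^ (#(S ∩ B)) = Real.exp (#(S ∩ B) * Real.log (1 - u)) := by
        rw [Real.exp_nat_mul, Real.exp_log (by linarith)]
      rw [this, Real.exp_le_exp]
      have : 0 ≤ u + 2 * u ^ 2 := by positivity
      calc _ ≤ (#(S ∩ B) : ℝ) * (-u - 2 * u ^ 2) := by nlinarith
        _ ≤ _ := by gcongr
    · intros; positivity
  have h4 : (#{S ∈ powersetCard N (univ : Finset Ω) | (#(S ∩ B) : ℝ) < m - δ * m} : ℝ) *
      Real.exp ((m - δ * m) * (-u - 2 * u ^ 2)) ≤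
      ((Fintype.card Ω).choose N : ℝ) * Real.exp (-(u * m)) :=
    h3.trans (h1.trans (by gcongr))
  have h5 : Real.exp (-(u * m)) ≤ Real.exp (-(δ ^ 2 * m / 8)) * Real.exp ((m - δ * m) * (-u - 2 * u ^ 2)) := by
    rw [← Real.exp_add, Real.exp_le_exp]
    have : -(δ ^ 2 * m / 8) + (m - δ * m) * (-u - 2 * u ^ 2) + u * m = m * (δ ^ 3 / 8) := by
      rw [hu]; ring
    have := mul_nonneg hm0 (show 0 ≤ δ ^ 3 / 8 by positivity)
    linarith
  have hpos := Real.exp_pos ((m - δ * m) * (-u - 2 * u ^ 2))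
  refine le_of_mul_le_mul_right (h4.trans ?_) hpos
  rw [mul_assoc]
  gcongr

open Finset in
lemma tail_both {Ω : Type*} [Fintype Ω] [DecidableEq Ω] (B : Finset Ω) (N : ℕ)
    (hN : N ≤ Fintype.card Ω) (hM : 0 < Fintype.card Ω) (δ m : ℝ) (hδ : 0 ≤ δ) (hδ1 : δ ≤ 1)
    (hm : m = #B * ((N : ℝ) / Fintype.card Ω)) :
    (#{S ∈ powersetCard N (univ : Finset Ω) | δ * m < |(#(S ∩ B) : ℝ) - m|} : ℝ) ≤
      ((Fintype.card Ω).choose N : ℝ) * (2 * Real.exp (-(δ ^ 2 * m / 8))) := by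
  have h1 := tail_up B N hN hM δ m hδ hδ1 hm
  have h2 := tail_low B N hN hM δ m hδ hδ1 hm
  have h3 : #{S ∈ powersetCard N (univ : Finset Ω) | δ * m < |(#(S ∩ B) : ℝ) - m|} ≤
      #{S ∈ powersetCard N (univ : Finset Ω) | m + δ * m < #(S ∩ B)} +
      #{S ∈ powersetCard N (univ : Finset Ω) | (#(S ∩ B) : ℝ) < m - δ * m} := by
    refine le_trans (card_le_card ?_) (card_union_le _ _)
    intro S hS
    simp only [mem_filter, mem_union] at hS ⊢
    rcases lt_abs.1 hS.2 with h | h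
    · left; exact ⟨hS.1, by linarith⟩
    · right; exact ⟨hS.1, by linarith⟩
  have h3' : (#{S ∈ powersetCard N (univ : Finset Ω) | δ * m < |(#(S ∩ B) : ℝ) - m|} : ℝ) ≤
      #{S ∈ powersetCard N (univ : Finset Ω) | m + δ * m < #(S ∩ B)} +
      #{S ∈ powersetCard N (univ : Finset Ω) | (#(S ∩ B) : ℝ) < m - δ * m} := by
    exact_mod_cast h3
  linarith

def Bx (d K : ℕ) : Finset (Fin d → ℕ) := Fintype.piFinset fun _ => Finset.range K

lemma mem_Bx {d K : ℕ} {x : Fin d → ℕ} : x ∈ Bx d K ↔ ∀ i, x i < K := by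
  simp [Bx]

noncomputable def tv (d K : ℕ) (u : (Fin d → ℕ) → ℝ) : ℝ :=
  ∑ i, ∑ x ∈ Bx d K, if x i + 1 < K then |u (x + Pi.single i 1) - u x| else 0

def ch {d : ℕ} (q : Fin d → ℕ) (e : Fin d → Fin 2) : Fin d → ℕ := fun i => 2 * q i + (e i : ℕ)

open Finset in
lemma sum_ch {d K : ℕ} (g : (Fin d → ℕ) → ℝ) :
    ∑ x ∈ Bx d (2 * K), g x = ∑ q ∈ Bx d K, ∑ e : Fin d → Fin 2, g (ch q e) := by
  rw [← sum_product']
  refine sum_nbij' (fun x => (fun i => x i / 2, fun i => ⟨x i % 2, Nat.mod_lt _ (by norm_num)⟩))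
    (fun p => ch p.1 p.2) ?_ ?_ ?_ ?_ ?_
  · intro x hx
    simp only [mem_product, mem_Bx, mem_univ, and_true] at hx ⊢
    intro i; have := hx i; omega
  · intro p hp
    simp only [mem_product, mem_Bx, mem_univ, and_true] at hp ⊢
    intro i; have := hp i; have := (p.2 i).isLt; simp only [ch]; omega
  · intro x _; funext i; simp only [ch]; omega
  · intro p _
    ext i
    · have := (p.2 i).isLt; simp only [ch]; omega
    · have := (p.2 i).isLt; simp only [ch]; omega
  · intro x _; congr 1; funext i; simp only [ch]; omega

noncomputable def Wq {d : ℕ} (v : (Fin d → ℕ) → ℝ) (q : Fin d → ℕ) : ℝ :=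
  ∑ i, ∑ e : Fin d → Fin 2,
    if ch q e i % 2 = 0 then |v (ch q e + Pi.single i 1) - v (ch q e)| else 0

open Finset in
lemma cube_path {d : ℕ} (v : (Fin d → ℕ) → ℝ) (q : Fin d → ℕ) (e : Fin d → Fin 2) :
    |v (ch q e) - v (ch q 0)| ≤ Wq v q := by
  have key : ∀ s : Finset (Fin d), |v (ch q (fun i => if i ∈ s then e i else 0)) - v (ch q 0)| ≤
      ∑ i ∈ s, ∑ e : Fin d → Fin 2,
        if ch q e i % 2 = 0 then |v (ch q e + Pi.single i 1) - v (ch q e)| else 0 := by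
    intro s
    induction s using Finset.induction_on with
    | empty =>
      have : (fun i => if i ∈ (∅ : Finset (Fin d)) then e i else 0) = (0 : Fin d → Fin 2) := by
        funext i; simp
      rw [this]; simp
    | insert a s ha ih =>
      rw [sum_insert ha]
      set η : Fin d → Fin 2 := fun i => if i ∈ s then e i else 0 with hη
      have hpos : ∀ η' : Fin d → Fin 2, 0 ≤
          (if ch q η' a % 2 = 0 then |v (ch q η' + Pi.single a 1) - v (ch q η')| else 0) := by
        intro η'; split_ifs <;> positivity
      have hstep : |v (ch q (fun i => if i ∈ insert a s then e i else 0)) - v (ch q η)| ≤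
          ∑ e : Fin d → Fin 2,
          if ch q e a % 2 = 0 then |v (ch q e + Pi.single a 1) - v (ch q e)| else 0 := by
        by_cases h0 : e a = 0
        · have : (fun i => if i ∈ insert a s then e i else 0) = η := by
            funext i
            by_cases hi : i = a
            · subst hi; simp [hη, ha, h0]
            · simp [hη, hi]
          rw [this]; simp only [sub_self, abs_zero]
          exact sum_nonneg fun η' _ => hpos η'
        · have h1 : e a = 1 := by omega
          have : ch q (fun i => if i ∈ insert a s then e i else 0) = ch q η + Pi.single a 1 := by
            funext i
            by_cases hi : i = a
            · subst hi; simp [ch, hη, ha, h1]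
            · simp [ch, hη, hi]
          rw [this]
          refine le_trans (le_of_eq ?_) (single_le_sum (fun η' _ => hpos η') (mem_univ η))
          rw [if_pos]
          simp [ch, hη, ha]
      calc _ ≤ |v (ch q (fun i => if i ∈ insert a s then e i else 0)) - v (ch q η)| +
            |v (ch q η) - v (ch q 0)| := abs_sub_le _ _ _
        _ ≤ _ := add_le_add hstep ih
  have := key univ
  simpa [Wq] using this

open Finset in
lemma sum_Wq {d K : ℕ} (v : (Fin d → ℕ) → ℝ) : ∑ q ∈ Bx d K, Wq v q ≤ tv d (2 * K) v := by
  unfold Wq tv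
  rw [sum_comm]
  apply sum_le_sum
  intro i _
  rw [sum_ch]
  apply sum_le_sum
  intro q hq
  apply sum_le_sum
  intro e _
  have h0 := mem_Bx.1 hq i
  have h3 := (e i).isLt
  have hx : ch q e i < 2 * K := by simp only [ch]; omega
  generalize ch q e = x at hx
  split_ifs with h1 h2
  · exact le_rfl
  · omega
  · positivity
  · exact le_rfl

noncomputable def Tu {d : ℕ} (u : (Fin d → ℕ) → ℝ) (q : Fin d → ℕ) : ℝ :=
  (∑ e : Fin d → Fin 2, u (ch q e)) / 2 ^ d

open Finset in
lemma Tu_close {d : ℕ} (u : (Fin d → ℕ) → ℝ) (q : Fin d → ℕ) (e : Fin d → Fin 2) :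
    |u (ch q e) - Tu u q| ≤ 2 * Wq u q := by
  have h1 := cube_path u q e
  have h2 : |u (ch q 0) - Tu u q| ≤ Wq u q := by
    have hc : (∑ _e : Fin d → Fin 2, (1 : ℝ)) = 2 ^ d := by simp
    have : u (ch q 0) - Tu u q = (∑ e : Fin d → Fin 2, (u (ch q 0) - u (ch q e))) / 2 ^ d := by
      rw [sum_sub_distrib, Tu, sub_div]
      congr 1
      simp
    rw [this, abs_div, abs_of_pos (show (0 : ℝ) < 2 ^ d by positivity),
      div_le_iff₀ (by positivity)]
    refine (abs_sum_le_sum_abs _ _).trans ?_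
    rw [← hc, mul_sum]
    apply sum_le_sum
    intro e _
    rw [abs_sub_comm, mul_one]
    exact cube_path u q e
  have := abs_sub_le (u (ch q e)) (u (ch q 0)) (Tu u q)
  linarith

open Finset in
lemma tv_Tu {d K : ℕ} (u : (Fin d → ℕ) → ℝ) : 2 ^ d * tv d K (Tu u) ≤ 2 * tv d (2 * K) u := by
  unfold tv
  rw [mul_sum, mul_sum]
  apply sum_le_sum
  intro i _
  set w : (Fin d → ℕ) → ℝ := fun x => |u (x + Pi.single i 1) - u x| with hw
  have hw0 : ∀ x, 0 ≤ w x := fun x => abs_nonneg _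
  have h1 : 2 ^ d * ∑ q ∈ Bx d K, (if q i + 1 < K then |Tu u (q + Pi.single i 1) - Tu u q| else 0) ≤
      ∑ x ∈ Bx d (2 * K), if x i + 2 < 2 * K then (w (x + Pi.single i 1) + w x) else 0 := by
    rw [sum_ch, mul_sum]
    apply sum_le_sum
    intro q _
    by_cases hq : q i + 1 < K
    · rw [if_pos hq]
      have hT : 2 ^ d * |Tu u (q + Pi.single i 1) - Tu u q| =
          |∑ e : Fin d → Fin 2, (u (ch (q + Pi.single i 1) e) - u (ch q e))| := by
        rw [sum_sub_distrib, Tu, Tu, ← sub_div, abs_div, abs_of_pos (show (0 : ℝ) < 2 ^ d by positivity)]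
        field_simp
      rw [hT]
      refine (abs_sum_le_sum_abs _ _).trans (sum_le_sum ?_)
      intro e _
      rw [if_pos (by have := (e i).isLt; simp only [ch]; omega)]
      have : ch (q + Pi.single i 1) e = ch q e + Pi.single i 1 + Pi.single i 1 := by
        funext j
        by_cases hj : j = i
        · subst hj; simp [ch]; ring
        · simp [ch, hj]
      rw [this]
      exact abs_sub_le _ _ _
    · rw [if_neg hq, mul_zero]
      apply sum_nonneg
      intro e _
      split_ifs
      · exact add_nonneg (hw0 _) (hw0 _)
      · exact le_rfl
  refine h1.trans ?_
  have h2 : ∑ x ∈ Bx d (2 * K), (if x i + 2 < 2 * K then w x else 0) ≤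
      ∑ x ∈ Bx d (2 * K), (if x i + 1 < 2 * K then w x else 0) := by
    apply sum_le_sum
    intro x _
    split_ifs
    · exact le_rfl
    · omega
    · exact hw0 _
    · exact le_rfl
  have h3 : ∑ x ∈ Bx d (2 * K), (if x i + 2 < 2 * K then w (x + Pi.single i 1) else 0) ≤
      ∑ x ∈ Bx d (2 * K), (if x i + 1 < 2 * K then w x else 0) := by
    rw [← sum_filter, ← sum_filter]
    have hinj : Set.InjOn (fun x : Fin d → ℕ => x + Pi.single i 1)
        ((Bx d (2 * K)).filter (fun x => x i + 2 < 2 * K)) := by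
      intro x _ y _ h; exact add_right_cancel h
    rw [← sum_image (f := w) hinj]
    apply sum_le_sum_of_subset_of_nonneg
    · intro y hy
      obtain ⟨x, hx, rfl⟩ := mem_image.1 hy
      rw [mem_filter, mem_Bx] at hx ⊢
      refine ⟨?_, ?_⟩
      · intro j
        by_cases hj : j = i
        · subst hj; simp; omega
        · simp [hj]; exact hx.1 j
      · simp; omega
    · intro x _ _; exact hw0 x
  have h4 : ∀ x ∈ Bx d (2 * K), (if x i + 2 < 2 * K then (w (x + Pi.single i 1) + w x) else 0) =
      (if x i + 2 < 2 * K then w (x + Pi.single i 1) else 0) + (if x i + 2 < 2 * K then w x else 0) := by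
    intro x _; split_ifs <;> simp
  rw [sum_congr rfl h4, sum_add_distrib]
  linarith

open Finset in
lemma core {d : ℕ} (hd : 1 ≤ d) (k : ℕ) (F : ℕ → (Fin d → ℕ) → ℝ) (β : ℝ) (hβ : 0 ≤ β)
    (hF0 : F 0 0 = 0)
    (hF : ∀ κ < k, ∀ q ∈ Bx d (2 ^ κ), F κ q = ∑ e : Fin d → Fin 2, F (κ + 1) (ch q e))
    (hB : ∀ κ ≤ k, ∀ q ∈ Bx d (2 ^ κ), |F κ q| ≤ β * (2 ^ (d - 1)) ^ (k - κ))
    (κ : ℕ) (hκ : κ ≤ k) (u : (Fin d → ℕ) → ℝ) :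
    |∑ x ∈ Bx d (2 ^ κ), u x * F κ x| ≤
      κ * 2 ^ (d + 1) * (β * (2 ^ (d - 1)) ^ (k - κ)) * tv d (2 ^ κ) u := by
  induction κ generalizing u with
  | zero =>
    have : ∀ x ∈ Bx d (2 ^ 0), u x * F 0 x = 0 := by
      intro x hx
      have : x = 0 := by
        funext i; have := mem_Bx.1 hx i; simp at this; simpa using this
      rw [this, hF0, mul_zero]
    rw [sum_congr rfl this]; simp
  | succ κ ih =>
    have ih := ih (by omega) (Tu u)
    set b := β * (2 ^ (d - 1) : ℝ) ^ (k - (κ + 1)) with hb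
    have hb0 : 0 ≤ b := by positivity
    have hbb : β * (2 ^ (d - 1) : ℝ) ^ (k - κ) = b * 2 ^ (d - 1) := by
      rw [hb, mul_assoc, ← pow_succ]; congr 2; omega
    rw [hbb] at ih
    rw [pow_succ, mul_comm (2 ^ κ) 2]
    have hsplit : ∑ x ∈ Bx d (2 * 2 ^ κ), u x * F (κ + 1) x =
        ∑ q ∈ Bx d (2 ^ κ), ∑ e : Fin d → Fin 2, (u (ch q e) - Tu u q) * F (κ + 1) (ch q e) +
        ∑ q ∈ Bx d (2 ^ κ), Tu u q * F κ q := by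
      rw [sum_ch, ← sum_add_distrib]
      apply sum_congr rfl
      intro q hq
      rw [hF κ (by omega) q hq, mul_sum, ← sum_add_distrib]
      apply sum_congr rfl
      intro e _; ring
    have hfirst : |∑ q ∈ Bx d (2 ^ κ), ∑ e : Fin d → Fin 2, (u (ch q e) - Tu u q) * F (κ + 1) (ch q e)|
        ≤ 2 ^ (d + 1) * b * tv d (2 * 2 ^ κ) u := by
      refine (abs_sum_le_sum_abs _ _).trans ?_
      refine le_trans ?_ (mul_le_mul_of_nonneg_left (sum_Wq (K := 2 ^ κ) u) (by positivity))
      rw [mul_sum]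
      apply sum_le_sum
      intro q hq
      refine (abs_sum_le_sum_abs _ _).trans ?_
      have : ∀ e ∈ (univ : Finset (Fin d → Fin 2)),
          |(u (ch q e) - Tu u q) * F (κ + 1) (ch q e)| ≤ 2 * Wq u q * b := by
        intro e _
        rw [abs_mul]
        have h1 := Tu_close u q e
        have h2 := hB (κ + 1) hκ (ch q e) (by
          rw [mem_Bx] at hq ⊢
          intro i; have := hq i; have := (e i).isLt; simp only [ch, pow_succ]; omega)
        have h3 := abs_nonneg (u (ch q e) - Tu u q)
        exact mul_le_mul h1 h2 (abs_nonneg _) (h3.trans h1)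
      refine (sum_le_sum this).trans (le_of_eq ?_)
      simp only [sum_const, nsmul_eq_mul, card_univ, Fintype.card_pi_const, Fintype.card_fin]
      push_cast; ring
    have hTV := tv_Tu (K := 2 ^ κ) u
    have h2d : (2 : ℝ) ^ d = 2 * 2 ^ (d - 1) := by
      rw [← pow_succ']; congr 1; omega
    have hTV' : 2 ^ (d - 1) * tv d (2 ^ κ) (Tu u) ≤ tv d (2 * 2 ^ κ) u := by
      rw [h2d] at hTV; linarith
    rw [hsplit]
    refine (abs_add_le _ _).trans ?_
    have h5 : (κ : ℝ) * 2 ^ (d + 1) * (b * 2 ^ (d - 1)) * tv d (2 ^ κ) (Tu u) ≤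
        κ * 2 ^ (d + 1) * b * tv d (2 * 2 ^ κ) u := by
      calc _ = κ * 2 ^ (d + 1) * b * (2 ^ (d - 1) * tv d (2 ^ κ) (Tu u)) := by ring
        _ ≤ _ := by gcongr
    push_cast
    linarith

open Finset in
lemma tv_ind {d K : ℕ} (Q : Finset (Fin d → ℕ)) (D : Finset (Fin d → ℕ))
    (hD : ∀ x ∈ Bx d K, x ∉ Q → (∃ y ∈ Q, ∀ i, x i ≤ y i + 1 ∧ y i ≤ x i + 1) → x ∈ D) :
    tv d K (fun x => if x ∈ Q then 1 else 0) ≤ 2 * d * #D := by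
  unfold tv
  have : ∀ i ∈ (univ : Finset (Fin d)), (∑ x ∈ Bx d K, if x i + 1 < K then
      |(if x + Pi.single i 1 ∈ Q then (1 : ℝ) else 0) - (if x ∈ Q then 1 else 0)| else 0) ≤ 2 * #D := by
    intro i _
    have hb : ∀ x ∈ Bx d K, (if x i + 1 < K then
      |(if x + Pi.single i 1 ∈ Q then (1 : ℝ) else 0) - (if x ∈ Q then 1 else 0)| else 0) ≤
        (if x ∈ D then 1 else 0) + (if x + Pi.single i 1 ∈ D then 1 else 0) := by
      intro x hx
      have hx' := mem_Bx.1 hx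
      have n1 : (0 : ℝ) ≤ (if x ∈ D then 1 else 0) := by split_ifs <;> norm_num
      have n2 : (0 : ℝ) ≤ (if x + Pi.single i 1 ∈ D then 1 else 0) := by split_ifs <;> norm_num
      by_cases hK : x i + 1 < K
      swap
      · rw [if_neg hK]; linarith
      rw [if_pos hK]
      have hbx : x + Pi.single i 1 ∈ Bx d K := by
        rw [mem_Bx]; intro j
        by_cases hj : j = i
        · subst hj; simpa using hK
        · simpa [hj] using hx' j
      have hadj : ∀ j, x j ≤ (x + Pi.single i 1 : Fin d → ℕ) j + 1 ∧
          (x + Pi.single i 1 : Fin d → ℕ) j ≤ x j + 1 := by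
        intro j
        by_cases hj : j = i
        · subst hj; simp; omega
        · simp [hj]
      by_cases h1 : x + Pi.single i 1 ∈ Q <;> by_cases h2 : x ∈ Q
      · simp only [h1, h2, if_true]; simp only [sub_self, abs_zero]; linarith
      · have := hD x hx h2 ⟨_, h1, hadj⟩
        rw [if_pos this]; simp only [h1, h2, if_true, if_false]; norm_num; exact n2
      · have := hD _ hbx h1 ⟨_, h2, fun j => (hadj j).symm⟩
        rw [if_pos this]; simp only [h1, h2, if_true, if_false]; norm_num; exact n1
      · simp only [h1, h2, if_false]; simp only [sub_self, abs_zero]; linarith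
    refine (sum_le_sum hb).trans ?_
    rw [sum_add_distrib]
    have e1 : ∑ x ∈ Bx d K, (if x ∈ D then (1 : ℝ) else 0) ≤ #D := by
      rw [← sum_filter, sum_const, nsmul_eq_mul, mul_one]
      exact_mod_cast card_le_card (fun x hx => (mem_filter.1 hx).2)
    have e2 : ∑ x ∈ Bx d K, (if x + Pi.single i 1 ∈ D then (1 : ℝ) else 0) ≤ #D := by
      rw [← sum_filter, sum_const, nsmul_eq_mul, mul_one]
      norm_cast
      exact card_le_card_of_injOn (fun x => x + Pi.single i 1)
        (fun x hx => (mem_filter.1 hx).2) (fun x _ y _ h => add_right_cancel h)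
    linarith
  refine (sum_le_sum this).trans (le_of_eq ?_)
  simp; ring
def cell {d : ℕ} (K M : ℕ) (x : Fin d → ℤ) : Fin d → ℕ := fun i => (x i - 1).toNat * K / M

open Finset in
lemma cnt_bd (K M q : ℕ) (hM : 0 < M) (hq : q < K) :
    |(#{x ∈ Icc (1 : ℤ) M | (x - 1).toNat * K / M = q} : ℝ) - (M : ℝ) / K| ≤ 1 := by
  have hK : (0 : ℝ) < K := by exact_mod_cast (by omega : 0 < K)
  have hM' : (0 : ℝ) < M := by exact_mod_cast hM
  set a : ℝ := (q : ℝ) * M / K with ha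
  set b : ℝ := ((q : ℝ) + 1) * M / K with hb
  have hab : b = a + M / K := by rw [ha, hb]; ring
  have ha0 : 0 ≤ a := by positivity
  have hb0 : 0 ≤ b := by positivity
  have hcard : #{x ∈ Icc (1 : ℤ) M | (x - 1).toNat * K / M = q} = #(Ico ⌈a⌉₊ ⌈b⌉₊) := by
    apply card_nbij' (fun x : ℤ => (x - 1).toNat) (fun t : ℕ => (t : ℤ) + 1)
    · intro x hx
      simp only [coe_filter, mem_Icc, Set.mem_ofPred_eq] at hx
      simp only [coe_Ico, Set.mem_Ico, Nat.ceil_le, Nat.lt_ceil]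
      obtain ⟨_, h⟩ := hx
      generalize (x - 1).toNat = t at h
      rw [Nat.div_eq_iff hM] at h
      rw [ha, hb, div_le_iff₀ hK, lt_div_iff₀ hK]
      have h1 : q * M ≤ t * K := by omega
      have h2 : t * K < (q + 1) * M := by rw [add_mul]; omega
      exact ⟨by exact_mod_cast h1, by exact_mod_cast h2⟩
    · intro t ht
      simp only [coe_Ico, Set.mem_Ico, Nat.ceil_le, Nat.lt_ceil] at ht
      simp only [coe_filter, mem_Icc, Set.mem_ofPred_eq]
      rw [ha, hb, div_le_iff₀ hK, lt_div_iff₀ hK] at ht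
      have h1 : q * M ≤ t * K := by exact_mod_cast ht.1
      have h2 : t * K < (q + 1) * M := by exact_mod_cast ht.2
      have h3 : t < M := by
        have : t * K < M * K := lt_of_lt_of_le h2 (by rw [mul_comm M K]; exact Nat.mul_le_mul_right _ hq)
        exact lt_of_mul_lt_mul_right this (Nat.zero_le _)
      refine ⟨⟨by omega, by omega⟩, ?_⟩
      have : ((t : ℤ) + 1 - 1).toNat = t := by omega
      rw [this, Nat.div_eq_iff hM]
      rw [add_mul] at h2
      omega
    · intro x hx
      simp only [coe_filter, mem_Icc, Set.mem_ofPred_eq] at hx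
      simp only
      omega
    · intro t _; simp
  have hMK : 0 < (M : ℝ) / K := by positivity
  have hle : ⌈a⌉₊ ≤ ⌈b⌉₊ := Nat.ceil_mono (by linarith)
  rw [hcard, Nat.card_Ico, Nat.cast_sub hle, abs_le]
  have h1 := Nat.le_ceil a
  have h2 := Nat.le_ceil b
  have h3 := Nat.ceil_lt_add_one ha0
  have h4 := Nat.ceil_lt_add_one hb0
  constructor <;> linarith

open Finset in
lemma grid_cell_card {d : ℕ} (K M : ℕ) (q : Fin d → ℕ) :
    #{y ∈ grid d M | cell K M y = q} =
      ∏ i, #{x ∈ Icc (1 : ℤ) M | (x - 1).toNat * K / M = q i} := by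
  rw [← Fintype.card_piFinset]
  congr 1
  ext y
  simp only [grid, mem_filter, Fintype.mem_piFinset, cell, funext_iff]
  exact forall_and.symm

lemma prod_bd {d : ℕ} (t : Fin d → ℝ) (ρ : ℝ) (hρ : 1 ≤ ρ) (ht : ∀ i, |t i - ρ| ≤ 1) :
    |∏ i, t i - ρ ^ d| ≤ d * (2 * ρ) ^ (d - 1) ∧ (ρ - 1) ^ d ≤ ∏ i, t i ∧
      ∏ i, t i ≤ (2 * ρ) ^ d := by
  have h1 : ∏ i, t i ≤ (ρ + 1) ^ d := by
    calc ∏ i, t i ≤ ∏ _i : Fin d, (ρ + 1) := by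
          apply Finset.prod_le_prod
          · intro i _; have := (abs_le.1 (ht i)).1; linarith
          · intro i _; have := (abs_le.1 (ht i)).2; linarith
      _ = _ := by simp
  have h2 : (ρ - 1) ^ d ≤ ∏ i, t i := by
    calc (ρ - 1) ^ d = ∏ _i : Fin d, (ρ - 1) := by simp
      _ ≤ _ := by
          apply Finset.prod_le_prod
          · intro i _; linarith
          · intro i _; have := (abs_le.1 (ht i)).1; linarith
  have h3 : (ρ + 1) ^ d ≤ (2 * ρ) ^ d := by gcongr; linarith
  refine ⟨?_, h2, h1.trans h3⟩
  have e1 := abs_pow_sub_pow_le (ρ + 1) ρ d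
  have e2 := abs_pow_sub_pow_le ρ (ρ - 1) d
  have m1 : max |ρ + 1| |ρ| ≤ 2 * ρ := by
    rw [abs_of_pos (by linarith), abs_of_pos (by linarith)]
    exact max_le (by linarith) (by linarith)
  have m2 : max |ρ| |ρ - 1| ≤ 2 * ρ := by
    rw [abs_of_pos (by linarith), abs_of_nonneg (by linarith)]
    exact max_le (by linarith) (by linarith)
  have f1 : (ρ + 1) ^ d - ρ ^ d ≤ d * (2 * ρ) ^ (d - 1) := by
    refine (le_abs_self _).trans (e1.trans ?_)
    have : |ρ + 1 - ρ| = 1 := by norm_num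
    rw [this, one_mul]
    gcongr
  have f2 : ρ ^ d - (ρ - 1) ^ d ≤ d * (2 * ρ) ^ (d - 1) := by
    refine (le_abs_self _).trans (e2.trans ?_)
    have : |ρ - (ρ - 1)| = 1 := by norm_num
    rw [this, one_mul]
    gcongr
  rw [abs_le]
  constructor <;> linarith

lemma cell_succ {d : ℕ} (κ M : ℕ) (x : Fin d → ℤ) (i : Fin d) :
    cell (2 ^ (κ + 1)) M x i / 2 = cell (2 ^ κ) M x i := by
  simp only [cell]
  rw [Nat.div_div_eq_div_mul, pow_succ, ← mul_assoc, Nat.mul_div_mul_right _ _ (by norm_num)]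

open Finset in
lemma sum_ch_ind {d : ℕ} (p q : Fin d → ℕ) :
    (∑ e : Fin d → Fin 2, if p = ch q e then (1 : ℕ) else 0) =
      if (fun i => p i / 2) = q then 1 else 0 := by
  split_ifs with h
  · rw [sum_eq_single (fun i => (⟨p i % 2, Nat.mod_lt _ (by norm_num)⟩ : Fin 2))]
    · rw [if_pos]
      funext i; subst h; simp only [ch]; omega
    · intro e _ he
      rw [if_neg]
      intro hp
      apply he
      funext i
      apply Fin.ext
      have := congrFun hp i
      simp only [ch] at this
      have := (e i).isLt
      simp only
      omega
    · simp
  · apply sum_eq_zero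
    intro e _
    rw [if_neg]
    intro hp
    apply h
    funext i
    have := congrFun hp i
    simp only [ch] at this
    have := (e i).isLt
    omega

open Finset in
lemma cell_refine {d : ℕ} (κ M : ℕ) (S : Finset (Fin d → ℤ)) (q : Fin d → ℕ) :
    #{x ∈ S | cell (2 ^ κ) M x = q} =
      ∑ e : Fin d → Fin 2, #{x ∈ S | cell (2 ^ (κ + 1)) M x = ch q e} := by
  simp only [card_filter]
  rw [sum_comm]
  apply sum_congr rfl
  intro x _
  rw [sum_ch_ind]
  simp only [cell_succ]

lemma cell_mem {d : ℕ} (K M : ℕ) (hK : 0 < K) (x : Fin d → ℤ) (hx : x ∈ grid d M) :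
    cell K M x ∈ Bx d K := by
  rw [mem_Bx]; intro i
  simp only [grid, Fintype.mem_piFinset, Finset.mem_Icc] at hx
  have := hx i
  have hM : 0 < M := by omega
  simp only [cell]
  rw [Nat.div_lt_iff_lt_mul hM, mul_comm]
  exact Nat.mul_lt_mul_of_pos_left (by omega) hK

lemma cell_real {d : ℕ} (K M : ℕ) (x : Fin d → ℤ) (hx : x ∈ grid d M) (i : Fin d) :
    (cell K M x i : ℝ) * M ≤ ((x i : ℝ) - 1) * K ∧
    ((x i : ℝ) - 1) * K < ((cell K M x i : ℝ) + 1) * M := by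
  simp only [grid, Fintype.mem_piFinset, Finset.mem_Icc] at hx
  have := hx i
  have hM : 0 < M := by omega
  obtain ⟨t, ht⟩ : ∃ t : ℕ, x i - 1 = t := ⟨(x i - 1).toNat, by omega⟩
  have hxt : (x i : ℝ) - 1 = t := by exact_mod_cast ht
  rw [hxt]
  have hc : cell K M x i = t * K / M := by simp only [cell]; rw [ht]; rfl
  rw [hc]
  have h1 : t * K / M * M ≤ t * K := Nat.div_mul_le_self _ _
  have h2 : t * K < (t * K / M + 1) * M := by
    rw [add_mul, one_mul]; exact Nat.lt_div_mul_add hM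
  exact ⟨by exact_mod_cast h1, by exact_mod_cast h2⟩

lemma card_grid (d n : ℕ) : (grid d n).card = n ^ d := by
  simp [grid]

lemma zdist_coord {d : ℕ} (x y : Fin d → ℤ) (i : Fin d) : |(x i : ℝ) - y i| ≤ zdist x y := by
  unfold zdist
  apply Real.abs_le_sqrt
  exact Finset.single_le_sum (f := fun i => ((x i : ℝ) - (y i : ℝ)) ^ 2)
    (fun _ _ => sq_nonneg _) (Finset.mem_univ i)

lemma zdist_ge_one {d : ℕ} (x y : Fin d → ℤ) (h : x ≠ y) : 1 ≤ zdist x y := by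
  obtain ⟨i, hi⟩ := Function.ne_iff.1 h
  refine le_trans ?_ (zdist_coord x y i)
  have : 1 ≤ |x i - y i| := Int.one_le_abs (sub_ne_zero.2 hi)
  exact_mod_cast this

lemma zdist_le {d : ℕ} (x y : Fin d → ℤ) (R : ℝ) (hR : 0 ≤ R)
    (h : ∀ i, |(x i : ℝ) - y i| ≤ R) : zdist x y ≤ d * R := by
  unfold zdist
  rw [Real.sqrt_le_left (by positivity)]
  calc ∑ i, ((x i : ℝ) - y i) ^ 2 ≤ ∑ _i : Fin d, R ^ 2 := by
        apply Finset.sum_le_sum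
        intro i _
        rw [← sq_abs]
        have := h i
        gcongr
    _ = d * R ^ 2 := by simp
    _ ≤ d ^ 2 * R ^ 2 := by
        have : (d : ℝ) ≤ d ^ 2 := by
          exact_mod_cast Nat.le_self_pow (by norm_num) d
        gcongr
    _ = _ := by ring

open Finset in
lemma hall_step {d : ℕ} (hd : 1 ≤ d) (n M k : ℕ) (hn : 0 < n) (hM : 0 < M)
    (S : Finset (Fin d → ℤ)) (hS : S ⊆ grid d M) (hcard : #S = n ^ d) (β : ℝ) (hβ : 0 ≤ β)
    (hl : (1 : ℝ) ≤ n / 2 ^ k)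
    (H : ∀ κ ≤ k, ∀ q ∈ Bx d (2 ^ κ), |(#{x ∈ S | cell (2 ^ κ) M x = q} : ℝ) -
      #{y ∈ grid d n | cell (2 ^ κ) n y = q}| ≤ β * (2 ^ (d - 1)) ^ (k - κ))
    (hk : k * 2 ^ (d + 1) * β * (2 * d) ≤ ((n : ℝ) / 2 ^ k - 1) ^ d)
    (A : Finset (Fin d → ℤ)) (hA : A ⊆ S) :
    #A ≤ #{y ∈ grid d n | ∃ x ∈ A, ∀ i, cell (2 ^ k) n y i ≤ cell (2 ^ k) M x i + 1 ∧
      cell (2 ^ k) M x i ≤ cell (2 ^ k) n y i + 1} := by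
  classical
  set a : ℕ → (Fin d → ℕ) → ℕ := fun κ q => #{x ∈ S | cell (2 ^ κ) M x = q} with ha
  set b : ℕ → (Fin d → ℕ) → ℕ := fun κ q => #{y ∈ grid d n | cell (2 ^ κ) n y = q} with hb
  set Q := A.image (cell (2 ^ k) M) with hQ
  have hQB : Q ⊆ Bx d (2 ^ k) := by
    intro q hq
    obtain ⟨x, hx, rfl⟩ := mem_image.1 hq
    exact cell_mem _ _ (by positivity) x (hS (hA hx))
  set D := (Bx d (2 ^ k)).filter (fun x => x ∉ Q ∧ ∃ y ∈ Q, ∀ i, x i ≤ y i + 1 ∧ y i ≤ x i + 1) with hD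
  have hdisj : Disjoint Q D := by
    rw [disjoint_right]; intro x hx; exact (mem_filter.1 hx).2.1
  have h1 : #A ≤ ∑ q ∈ Q, a k q := by
    have : #{x ∈ S | cell (2 ^ k) M x ∈ Q} = ∑ q ∈ Q, a k q := by
      rw [card_eq_sum_card_fiberwise (f := cell (2 ^ k) M) (t := Q)]
      · apply sum_congr rfl
        intro q hq
        simp only [ha, filter_filter]
        congr 1
        ext x
        simp only [mem_filter]
        constructor
        · rintro ⟨h1, _, h2⟩; exact ⟨h1, h2⟩
        · rintro ⟨h1, h2⟩; exact ⟨h1, h2 ▸ hq, h2⟩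
      · intro x hx; exact (mem_filter.1 hx).2
    rw [← this]
    apply card_le_card
    intro x hx
    exact mem_filter.2 ⟨hA hx, mem_image_of_mem _ hx⟩
  have h2 : ∑ q ∈ Q ∪ D, b k q ≤ #{y ∈ grid d n | ∃ x ∈ A, ∀ i, cell (2 ^ k) n y i ≤ cell (2 ^ k) M x i + 1 ∧
      cell (2 ^ k) M x i ≤ cell (2 ^ k) n y i + 1} := by
    have : #{y ∈ grid d n | cell (2 ^ k) n y ∈ Q ∪ D} = ∑ q ∈ Q ∪ D, b k q := by
      rw [card_eq_sum_card_fiberwise (f := cell (2 ^ k) n) (t := Q ∪ D)]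
      · apply sum_congr rfl
        intro q hq
        simp only [hb, filter_filter]
        congr 1
        ext x
        simp only [mem_filter]
        constructor
        · rintro ⟨h1, _, h2⟩; exact ⟨h1, h2⟩
        · rintro ⟨h1, h2⟩; exact ⟨h1, h2 ▸ hq, h2⟩
      · intro x hx; exact (mem_filter.1 hx).2
    rw [← this]
    apply card_le_card
    intro y hy
    rw [mem_filter] at hy ⊢
    refine ⟨hy.1, ?_⟩
    rcases mem_union.1 hy.2 with h | h
    · obtain ⟨x, hx, hxy⟩ := mem_image.1 h
      refine ⟨x, hx, fun i => ?_⟩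
      rw [hxy]; omega
    · obtain ⟨_, _, z, hz, hzy⟩ := mem_filter.1 h
      obtain ⟨x, hx, rfl⟩ := mem_image.1 hz
      exact ⟨x, hx, hzy⟩
  refine h1.trans (le_trans ?_ h2)
  rw [sum_union hdisj]
  have hcore := core hd k (fun κ q => (a κ q : ℝ) - b κ q) β hβ (by
      have e1 : a 0 0 = n ^ d := by
        rw [← hcard]; simp only [ha]
        congr 1
        rw [filter_eq_self]
        intro x hx
        have := mem_Bx.1 (cell_mem (2 ^ 0) M (by positivity) x (hS hx))
        funext i; have := this i; simp only [Pi.zero_apply]; omega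
      have e2 : b 0 0 = n ^ d := by
        rw [← card_grid]; simp only [hb]
        congr 1
        rw [filter_eq_self]
        intro x hx
        have := mem_Bx.1 (cell_mem (2 ^ 0) n (by positivity) x hx)
        funext i; have := this i; simp only [Pi.zero_apply]; omega
      simp only [e1, e2, sub_self]) (by
      intro κ _ q _
      simp only [ha, hb]
      rw [cell_refine κ M S q, cell_refine κ n (grid d n) q, sum_sub_distrib]
      push_cast; rfl) H k le_rfl (fun x => if x ∈ Q then 1 else 0)
  have htv := tv_ind (K := 2 ^ k) Q D (fun x hx hxQ hy => mem_filter.2 ⟨hx, hxQ, hy⟩)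
  rw [Nat.sub_self, pow_zero, mul_one] at hcore
  have hsum : ∑ x ∈ Bx d (2 ^ k), (if x ∈ Q then (1 : ℝ) else 0) * ((a k x : ℝ) - b k x) =
      ∑ q ∈ Q, (a k q : ℝ) - ∑ q ∈ Q, (b k q : ℝ) := by
    rw [← sum_sub_distrib]
    simp only [ite_mul, one_mul, zero_mul]
    rw [← sum_filter]
    congr 1
    ext x; rw [mem_filter]
    exact ⟨fun h => h.2, fun h => ⟨hQB h, h⟩⟩
  have hDb : (#D : ℝ) * ((n : ℝ) / 2 ^ k - 1) ^ d ≤ ∑ q ∈ D, (b k q : ℝ) := by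
    rw [← nsmul_eq_mul, ← sum_const]
    apply sum_le_sum
    intro q hq
    have hq := mem_Bx.1 (mem_filter.1 hq).1
    simp only [hb]
    rw [grid_cell_card]
    push_cast
    refine (prod_bd _ ((n : ℝ) / 2 ^ k) hl ?_).2.1
    intro i
    have := cnt_bd (2 ^ k) n (q i) hn (hq i)
    push_cast at this
    exact this
  have hfin : ∑ q ∈ Q, (a k q : ℝ) ≤ ∑ q ∈ Q, (b k q : ℝ) + ∑ q ∈ D, (b k q : ℝ) := by
    simp only [hsum] at hcore
    have h5 := (le_abs_self _).trans hcore
    have h6 : (k : ℝ) * 2 ^ (d + 1) * β * tv d (2 ^ k) (fun x => if x ∈ Q then 1 else 0) ≤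
        k * 2 ^ (d + 1) * β * (2 * d * #D) := by gcongr
    have h7 : (k : ℝ) * 2 ^ (d + 1) * β * (2 * d * #D) ≤ #D * ((n : ℝ) / 2 ^ k - 1) ^ d := by
      calc _ = #D * (k * 2 ^ (d + 1) * β * (2 * d)) := by ring
        _ ≤ _ := by gcongr
    linarith
  exact_mod_cast hfin

open Finset in
lemma det {d : ℕ} (hd : 1 ≤ d) (n M k : ℕ) (hn : 0 < n) (hnM : n ≤ M)
    (S : Finset (Fin d → ℤ)) (hS : S ⊆ grid d M) (hcard : #S = n ^ d) (β : ℝ) (hβ : 0 ≤ β)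
    (hl : (1 : ℝ) ≤ n / 2 ^ k)
    (H : ∀ κ ≤ k, ∀ q ∈ Bx d (2 ^ κ), |(#{x ∈ S | cell (2 ^ κ) M x = q} : ℝ) -
      #{y ∈ grid d n | cell (2 ^ κ) n y = q}| ≤ β * (2 ^ (d - 1)) ^ (k - κ))
    (hk : k * 2 ^ (d + 1) * β * (2 * d) ≤ ((n : ℝ) / 2 ^ k - 1) ^ d) :
    Fleast d n S ≤ d * (4 * ((n : ℝ) / 2 ^ k) + 1) := by
  classical
  have hM : 0 < M := by omega
  set l := (n : ℝ) / 2 ^ k with hldef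
  set t : {x // x ∈ S} → Finset (Fin d → ℤ) := fun x =>
    {y ∈ grid d n | ∀ i, cell (2 ^ k) n y i ≤ cell (2 ^ k) M x i + 1 ∧
      cell (2 ^ k) M x i ≤ cell (2 ^ k) n y i + 1} with ht
  have hall : ∀ A : Finset {x // x ∈ S}, #A ≤ #(A.biUnion t) := by
    intro A
    have h := hall_step hd n M k hn hM S hS hcard β hβ hl H hk (A.map (Function.Embedding.subtype _))
      (by intro x hx; obtain ⟨y, _, rfl⟩ := mem_map.1 hx; exact y.2)
    rw [card_map] at h
    refine h.trans (card_le_card ?_)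
    intro y hy
    rw [mem_filter] at hy
    obtain ⟨hy, x, hx, hxy⟩ := hy
    obtain ⟨x, hxA, rfl⟩ := mem_map.1 hx
    rw [mem_biUnion]
    exact ⟨x, hxA, mem_filter.2 ⟨hy, hxy⟩⟩
  obtain ⟨g, hginj, hg⟩ := (Finset.all_card_le_biUnion_card_iff_exists_injective t).1 hall
  set f : (Fin d → ℤ) → (Fin d → ℤ) := fun x => if h : x ∈ S then g ⟨x, h⟩ else 0 with hf
  have hfS : ∀ x (h : x ∈ S), f x = g ⟨x, h⟩ := fun x h => by simp only [hf]; rw [dif_pos h]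
  have hfgrid : ∀ x ∈ S, f x ∈ grid d n := by
    intro x hx; rw [hfS x hx]; exact (mem_filter.1 (hg ⟨x, hx⟩)).1
  have hfinj : Set.InjOn f S := by
    intro x hx y hy h
    rw [hfS x hx, hfS y hy] at h
    exact congrArg Subtype.val (hginj h)
  have himg : S.image f = grid d n := by
    apply eq_of_subset_of_card_le
    · intro y hy; obtain ⟨x, hx, rfl⟩ := mem_image.1 hy; exact hfgrid x hx
    · rw [card_image_of_injOn hfinj, hcard, card_grid]
  have hK : (0 : ℝ) < 2 ^ k := by positivity
  have hMr : (0 : ℝ) < M := by exact_mod_cast hM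
  have hnr : (0 : ℝ) < n := by exact_mod_cast hn
  have hclose : ∀ x ∈ S, ∀ i, |((x i : ℝ) - 1) * (n / M) - ((f x i : ℝ) - 1)| ≤ 2 * l := by
    intro x hx i
    have c1 := cell_real (2 ^ k) M x (hS hx) i
    have c2 := cell_real (2 ^ k) n (f x) (hfgrid x hx) i
    have c3 := (mem_filter.1 (hg ⟨x, hx⟩)).2 i
    rw [← hfS x hx] at c3
    simp only at c3
    push_cast at c1 c2
    have c3a : (cell (2 ^ k) n (f x) i : ℝ) ≤ cell (2 ^ k) M x i + 1 := by exact_mod_cast c3.1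
    have c3b : (cell (2 ^ k) M x i : ℝ) ≤ cell (2 ^ k) n (f x) i + 1 := by exact_mod_cast c3.2
    generalize (cell (2 ^ k) n (f x) i : ℝ) = p at *
    generalize (cell (2 ^ k) M x i : ℝ) = q at *
    have e1 : q * l ≤ ((x i : ℝ) - 1) * (n / M) := by
      have : q ≤ ((x i : ℝ) - 1) * 2 ^ k / M := by rw [le_div_iff₀ hMr]; exact c1.1
      calc q * l ≤ ((x i : ℝ) - 1) * 2 ^ k / M * l := by gcongr
        _ = _ := by rw [hldef]; field_simp
    have e2 : ((x i : ℝ) - 1) * (n / M) ≤ (q + 1) * l := by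
      have : ((x i : ℝ) - 1) * 2 ^ k / M ≤ q + 1 := by rw [div_le_iff₀ hMr]; exact c1.2.le
      calc _ = ((x i : ℝ) - 1) * 2 ^ k / M * l := by rw [hldef]; field_simp
        _ ≤ _ := by gcongr
    have e3 : p * l ≤ (f x i : ℝ) - 1 := by
      rw [hldef, ← mul_div_assoc, div_le_iff₀ hK]; exact c2.1
    have e4 : (f x i : ℝ) - 1 ≤ (p + 1) * l := by
      rw [hldef, ← mul_div_assoc, le_div_iff₀ hK]; exact c2.2.le
    rw [abs_le]
    constructor <;> nlinarith
  have hmem : (d * (4 * l + 1) : ℝ) ∈ {L : ℝ | ∃ f : (Fin d → ℤ) → (Fin d → ℤ),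
    (∀ x ∈ S, f x ∈ grid d n) ∧
    (∀ y ∈ grid d n, ∃ x ∈ S, f x = y) ∧
    (∀ x ∈ S, ∀ y ∈ S, zdist (f x) (f y) ≤ L * zdist x y)} := by
    refine ⟨f, hfgrid, ?_, ?_⟩
    · intro y hy
      rw [← himg] at hy
      exact mem_image.1 hy
    · intro x hx y hy
      by_cases hxy : x = y
      · subst hxy; simp [zdist]
      have hz := zdist_ge_one x y hxy
      rw [mul_assoc]
      apply zdist_le
      · positivity
      intro i
      have a1 := abs_le.1 (hclose x hx i)
      have a2 := abs_le.1 (hclose y hy i)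
      have a3 : |((x i : ℝ) - y i) * (n / M)| ≤ zdist x y := by
        rw [abs_mul, abs_of_pos (show (0 : ℝ) < n / M by positivity)]
        have : (n : ℝ) / M ≤ 1 := by rw [div_le_one hMr]; exact_mod_cast hnM
        calc _ ≤ |(x i : ℝ) - y i| * 1 := by gcongr
          _ ≤ _ := by rw [mul_one]; exact zdist_coord x y i
      have a3 := abs_le.1 a3
      have a4 : 4 * l ≤ 4 * l * zdist x y := le_mul_of_one_le_right (by linarith) hz
      rw [abs_le]
      constructor <;> linarith [a1.1, a1.2, a2.1, a2.2, a3.1, a3.2]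
  unfold Fleast
  by_cases hbd : BddBelow {L : ℝ | ∃ f : (Fin d → ℤ) → (Fin d → ℤ),
    (∀ x ∈ S, f x ∈ grid d n) ∧
    (∀ y ∈ grid d n, ∃ x ∈ S, f x = y) ∧
    (∀ x ∈ S, ∀ y ∈ S, zdist (f x) (f y) ≤ L * zdist x y)}
  · exact csInf_le hbd hmem
  · rw [Real.sInf_of_not_bddBelow hbd]
    positivity

def gcoe {d : ℕ} {m : ℤ} (x : gridPt d m) : Fin d → ℤ := fun i => (x i : ℤ)

lemma gcoe_inj {d : ℕ} {m : ℤ} : Function.Injective (gcoe : gridPt d m → Fin d → ℤ) := by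
  intro x y h
  funext i
  exact Subtype.ext (congrFun h i)

open Finset in
noncomputable def Bc (d M K : ℕ) (q : Fin d → ℕ) : Finset (gridPt d (M : ℤ)) :=
  {x | cell K M (gcoe x) = q}

open Finset in
lemma toLattice_cell {d M K : ℕ} (q : Fin d → ℕ) (S : Finset (gridPt d (M : ℤ))) :
    #{x ∈ toLattice S | cell K M x = q} = #(S ∩ Bc d M K q) := by
  rw [← card_image_of_injective _ gcoe_inj]
  congr 1
  ext x
  simp only [toLattice, mem_filter, mem_image, mem_inter, Bc, mem_univ, true_and]
  constructor
  · rintro ⟨⟨y, hy, rfl⟩, h⟩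
    exact ⟨y, ⟨hy, h⟩, rfl⟩
  · rintro ⟨y, ⟨hy, h⟩, rfl⟩
    exact ⟨⟨y, hy, rfl⟩, h⟩

open Finset in
lemma toLattice_subset {d M : ℕ} (S : Finset (gridPt d (M : ℤ))) : toLattice S ⊆ grid d M := by
  intro x hx
  obtain ⟨y, _, rfl⟩ := mem_image.1 hx
  simp only [grid, Fintype.mem_piFinset]
  intro i
  exact (y i).2

open Finset in
lemma toLattice_card {d M : ℕ} (S : Finset (gridPt d (M : ℤ))) : #(toLattice S) = #S :=
  card_image_of_injective _ gcoe_inj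

open Finset in
lemma card_gridPt (d M : ℕ) : Fintype.card (gridPt d (M : ℤ)) = M ^ d := by
  simp

open Finset in
lemma toLattice_univ (d M : ℕ) : toLattice (univ : Finset (gridPt d (M : ℤ))) = grid d M := by
  apply eq_of_subset_of_card_le (toLattice_subset _)
  rw [toLattice_card, card_grid, card_univ, card_gridPt]

open Finset in
lemma card_Bc {d : ℕ} (M K : ℕ) (q : Fin d → ℕ) :
    #(Bc d M K q) = ∏ i, #{x ∈ Icc (1 : ℤ) M | (x - 1).toNat * K / M = q i} := by
  rw [← grid_cell_card, ← toLattice_univ, toLattice_cell, univ_inter]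

open Finset in
lemma mean_bd {d : ℕ} (n M κ : ℕ) (hn : 0 < n) (hnM : n ≤ M) (q : Fin d → ℕ)
    (hq : q ∈ Bx d (2 ^ κ)) (hρ : (1 : ℝ) ≤ n / 2 ^ κ) (m : ℝ)
    (hm : m = #(Bc d M (2 ^ κ) q) * (((n ^ d : ℕ) : ℝ) / Fintype.card (gridPt d (M : ℤ)))) :
    |m - ((n : ℝ) / 2 ^ κ) ^ d| ≤ d * (2 * ((n : ℝ) / 2 ^ κ)) ^ (d - 1) ∧
      ((n : ℝ) / 2 ^ κ - 1) ^ d ≤ m ∧ m ≤ (2 * ((n : ℝ) / 2 ^ κ)) ^ d := by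
  have hMr : (0 : ℝ) < M := by exact_mod_cast (by omega : 0 < M)
  have hmp : m = ∏ i, ((#{x ∈ Icc (1 : ℤ) M | (x - 1).toNat * 2 ^ κ / M = q i} : ℝ) * (n / M)) := by
    rw [hm, card_Bc, card_gridPt, prod_mul_distrib]
    simp [div_pow]
  rw [hmp]
  apply prod_bd _ _ hρ
  intro i
  have := cnt_bd (2 ^ κ) M (q i) (by omega) (mem_Bx.1 hq i)
  push_cast at this
  have h1 : (n : ℝ) / M ≤ 1 := by rw [div_le_one hMr]; exact_mod_cast hnM
  have h0 : (0 : ℝ) ≤ n / M := by positivity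
  have e : ∀ c : ℝ, c * (n / M) - n / 2 ^ κ = (c - M / 2 ^ κ) * (n / M) := by
    intro c; field_simp
  rw [e, abs_mul, abs_of_nonneg h0]
  exact mul_le_one₀ this h0 h1

noncomputable def Acst (d : ℕ) : ℝ := 4 * d * 4 ^ d * (1 + d * 2 ^ d)

lemma Acst_ge {d : ℕ} (hd : 4 ≤ d) : (8 : ℝ) ^ (d + 1) ≤ Acst d ∧ (d : ℝ) + 3 ≤ Acst d := by
  have hd' : (4 : ℝ) ≤ d := by exact_mod_cast hd
  have h8 : (8 : ℝ) ^ d = 4 ^ d * 2 ^ d := by rw [← mul_pow]; norm_num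
  have h1 : (8 : ℝ) ^ (d + 1) ≤ Acst d := by
    unfold Acst
    calc (8 : ℝ) ^ (d + 1) = 4 * 2 * 4 ^ d * (1 * 2 ^ d) := by rw [pow_succ, h8]; ring
      _ ≤ 4 * d * 4 ^ d * (1 + d * 2 ^ d) := by
        have : (1 : ℝ) * 2 ^ d ≤ 1 + d * 2 ^ d := by
          have : (0 : ℝ) < 2 ^ d := by positivity
          nlinarith
        gcongr
        linarith
  refine ⟨h1, le_trans ?_ h1⟩
  have h2 : d + 3 ≤ 8 ^ (d + 1) := by
    have : d + 1 < 2 ^ (d + 1) := Nat.lt_two_pow_self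
    have h3 : 2 ^ (d + 1) * 4 ^ (d + 1) = 8 ^ (d + 1) := by rw [← mul_pow]; norm_num
    have h4 : 4 ^ 1 ≤ 4 ^ (d + 1) := Nat.pow_le_pow_right (by norm_num) (by omega)
    nlinarith
  exact_mod_cast h2

lemma box_alg (e : ℕ) (ρ : ℝ) (h : 0 < ρ) :
    ρ ^ e / 8 ^ (e + 2 + 1) = (1 / (2 ^ (e + 2) * ρ)) ^ 2 * (ρ / 2) ^ (e + 2) / 8 := by
  have h8 : (8 : ℝ) ^ (e + 2) = 2 ^ (e + 2) * 2 ^ (e + 2) * 2 ^ (e + 2) := by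
    rw [← mul_pow, ← mul_pow]; norm_num
  have h2 : (0 : ℝ) < 2 ^ (e + 2) := by positivity
  rw [pow_succ 8 (e + 2), h8, div_pow ρ 2, pow_add ρ e 2]
  generalize (2 : ℝ) ^ (e + 2) = t at *
  generalize ρ ^ e = s
  field_simp

open Finset in
lemma box_prob {d : ℕ} (hd : 4 ≤ d) (n M κ : ℕ) (hn : 2 ≤ n) (hnM : n ≤ M)
    (hρ : Acst d * Real.logb 2 n ≤ (n : ℝ) / 2 ^ κ) (q : Fin d → ℕ) (hq : q ∈ Bx d (2 ^ κ)) :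
    (#{S ∈ powersetCard (n ^ d) (univ : Finset (gridPt d (M : ℤ))) |
      ((n : ℝ) / 2 ^ κ) ^ (d - 1) < |(#(S ∩ Bc d M (2 ^ κ) q) : ℝ) -
        #(Bc d M (2 ^ κ) q) * (((n ^ d : ℕ) : ℝ) / Fintype.card (gridPt d (M : ℤ)))|} : ℝ) ≤
      ((M ^ d).choose (n ^ d) : ℝ) * (2 / (n : ℝ) ^ (d + 3)) := by
  have hnr : (2 : ℝ) ≤ n := by exact_mod_cast hn
  obtain ⟨hA1, hA2⟩ := Acst_ge hd
  set L := Real.logb 2 n with hL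
  have hlogn : 0 < Real.log n := Real.log_pos (by linarith)
  have hL1 : 1 ≤ L := by
    rw [hL, Real.le_logb_iff_rpow_le (by norm_num) (by linarith)]; simpa using hnr
  have hLn : Real.log n ≤ L := by
    rw [hL, Real.logb, le_div_iff₀ (Real.log_pos (by norm_num))]
    have : Real.log 2 ≤ 1 := by have := Real.log_two_lt_d9; linarith
    nlinarith
  set ρ := (n : ℝ) / 2 ^ κ with hρd
  have h8 : (8 : ℝ) ≤ 8 ^ (d + 1) := by
    calc (8 : ℝ) = 8 ^ 1 := by norm_num
      _ ≤ _ := pow_le_pow_right₀ (by norm_num) (by omega)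
  have hρ8 : 8 ≤ ρ := by nlinarith
  have hcard := card_gridPt d M
  set m : ℝ := #(Bc d M (2 ^ κ) q) * (((n ^ d : ℕ) : ℝ) / Fintype.card (gridPt d (M : ℤ))) with hm
  obtain ⟨_, hm2, hm3⟩ := mean_bd n M κ (by omega) hnM q hq (by linarith) m hm
  rw [← hρd] at hm2 hm3
  have hMpos : 0 < M ^ d := by have : 0 < M := by omega
                               positivity
  set δ : ℝ := 1 / (2 ^ d * ρ) with hδ
  have hρ0 : 0 < ρ := by linarith
  have h2d : (1 : ℝ) ≤ 2 ^ d := one_le_pow₀ (by norm_num)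
  have hδ1 : δ ≤ 1 := by
    rw [hδ, div_le_one (by positivity)]; nlinarith
  have ht := tail_both (Bc d M (2 ^ κ) q) (n ^ d) (by rw [hcard]; exact Nat.pow_le_pow_left hnM d)
    (by rw [hcard]; exact hMpos) δ m (by positivity) hδ1 hm
  rw [hcard] at ht
  have hdm : δ * m ≤ ρ ^ (d - 1) := by
    calc δ * m ≤ δ * (2 * ρ) ^ d := by gcongr
      _ = ρ ^ (d - 1) := by
        obtain ⟨e, rfl⟩ : ∃ e, d = e + 1 := ⟨d - 1, by omega⟩
        rw [hδ, mul_pow, Nat.add_sub_cancel, pow_succ ρ e]; field_simp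
  have hexp : Real.exp (-(δ ^ 2 * m / 8)) ≤ 1 / (n : ℝ) ^ (d + 3) := by
    have hm4 : (ρ / 2) ^ d ≤ m := le_trans (by gcongr; linarith) hm2
    have h5 : ρ ^ 2 / 8 ^ (d + 1) ≤ δ ^ 2 * m / 8 := by
      calc ρ ^ 2 / 8 ^ (d + 1) ≤ ρ ^ (d - 2) / 8 ^ (d + 1) := by
            gcongr
            · linarith
            · omega
        _ = δ ^ 2 * (ρ / 2) ^ d / 8 := by
            obtain ⟨e, rfl⟩ : ∃ e, d = e + 2 := ⟨d - 2, by omega⟩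
            rw [hδ, Nat.add_sub_cancel]
            exact box_alg e ρ hρ0
        _ ≤ _ := by gcongr
    have h6 : ((d : ℝ) + 3) * Real.log n ≤ ρ ^ 2 / 8 ^ (d + 1) := by
      rw [le_div_iff₀ (by positivity)]
      have hA0 : 0 ≤ Acst d := by linarith
      have hL0 : 0 ≤ L := by linarith
      have hAL0 : 0 ≤ Acst d * L := mul_nonneg hA0 hL0
      calc ((d : ℝ) + 3) * Real.log n * 8 ^ (d + 1) ≤ Acst d * L * Acst d := by gcongr
        _ ≤ Acst d * L * (Acst d * L) := by
            have : 0 ≤ Acst d := by linarith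
            gcongr
            nlinarith
        _ ≤ ρ * ρ := by
            have : 0 ≤ Acst d := by linarith
            gcongr
        _ = _ := by ring
    have h7 : (1 : ℝ) / (n : ℝ) ^ (d + 3) = Real.exp (-(((d : ℝ) + 3) * Real.log n)) := by
      rw [Real.exp_neg, one_div]
      congr 1
      have : ((d : ℝ) + 3) * Real.log n = ((d + 3 : ℕ) : ℝ) * Real.log n := by push_cast; ring
      rw [this, Real.exp_nat_mul, Real.exp_log (by linarith)]
    rw [h7, Real.exp_le_exp]
    linarith
  calc _ ≤ (#{S ∈ powersetCard (n ^ d) (univ : Finset (gridPt d (M : ℤ))) |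
      δ * m < |(#(S ∩ Bc d M (2 ^ κ) q) : ℝ) - m|} : ℝ) := by
        norm_cast
        apply card_le_card
        intro S hS
        rw [mem_filter] at hS ⊢
        exact ⟨hS.1, lt_of_le_of_lt hdm hS.2⟩
    _ ≤ _ := ht
    _ ≤ _ := by
        have : 2 / (n : ℝ) ^ (d + 3) = 2 * (1 / (n : ℝ) ^ (d + 3)) := by ring
        rw [this]
        gcongr

open Finset in
lemma main_count {d : ℕ} (hd : 4 ≤ d) (n M k : ℕ) (hn : 2 ≤ n) (hnM : n ≤ M)
    (hl : Acst d * Real.logb 2 n ≤ (n : ℝ) / 2 ^ k) :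
    ({S : Config d (M : ℤ) (n ^ d) |
      ¬ Fleast d n (toLattice S.1) ≤ d * (4 * ((n : ℝ) / 2 ^ k) + 1)}.ncard : ℝ) ≤
      ((M ^ d).choose (n ^ d) : ℝ) * (2 / (n : ℝ) ^ 2) := by
  classical
  have hnr : (2 : ℝ) ≤ n := by exact_mod_cast hn
  obtain ⟨hA1, hA2⟩ := Acst_ge hd
  have hL1 : 1 ≤ Real.logb 2 n := by
    rw [Real.le_logb_iff_rpow_le (by norm_num) (by linarith)]; simpa using hnr
  have hl8 : 4 ≤ (n : ℝ) / 2 ^ k := by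
    have : (4 : ℝ) ≤ d := by exact_mod_cast hd
    nlinarith
  have hkn : (2 : ℝ) ^ k ≤ n := by
    rw [le_div_iff₀ (by positivity)] at hl8
    have : (0 : ℝ) < 2 ^ k := by positivity
    linarith
  have hkn' : 2 ^ k ≤ n := by exact_mod_cast hkn
  have hkL : (k : ℝ) ≤ Real.logb 2 n := by
    rw [Real.le_logb_iff_rpow_le (by norm_num) (by linarith), Real.rpow_natCast]; exact hkn
  set P : ℕ → (Fin d → ℕ) → Finset (gridPt d (M : ℤ)) → Prop := fun κ q S =>
    ((n : ℝ) / 2 ^ κ) ^ (d - 1) < |(#(S ∩ Bc d M (2 ^ κ) q) : ℝ) -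
        #(Bc d M (2 ^ κ) q) * (((n ^ d : ℕ) : ℝ) / Fintype.card (gridPt d (M : ℤ)))| with hP
  have hρl : ∀ κ ≤ k, (n : ℝ) / 2 ^ k ≤ n / 2 ^ κ := by
    intro κ hκ
    gcongr
    norm_num
  set bad : Finset (Finset (gridPt d (M : ℤ))) := (range (k + 1)).biUnion fun κ =>
    (Bx d (2 ^ κ)).biUnion fun q => {S ∈ powersetCard (n ^ d) univ | P κ q S} with hbad
  have hsub : (Subtype.val '' {S : Config d (M : ℤ) (n ^ d) |
      ¬ Fleast d n (toLattice S.1) ≤ d * (4 * ((n : ℝ) / 2 ^ k) + 1)}) ⊆ (bad : Set _) := by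
    rintro _ ⟨⟨S, hS⟩, hF, rfl⟩
    by_contra hnb
    apply hF
    simp only
    have hgood : ∀ κ ≤ k, ∀ q ∈ Bx d (2 ^ κ), ¬ P κ q S := by
      intro κ hκ q hq hPq
      apply hnb
      rw [mem_coe, hbad, mem_biUnion]
      refine ⟨κ, mem_range.2 (by omega), ?_⟩
      rw [mem_biUnion]
      exact ⟨q, hq, mem_filter.2 ⟨mem_powersetCard_univ.2 hS, hPq⟩⟩
    apply det (by omega) n M k (by omega) hnM (toLattice S) (toLattice_subset S)
      (by rw [toLattice_card, hS]) ((1 + d * 2 ^ d) * ((n : ℝ) / 2 ^ k) ^ (d - 1)) (by positivity)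
      (by linarith)
    · intro κ hκ q hq
      have hg := hgood κ hκ q hq
      simp only [hP, not_lt] at hg
      have hρ1 : 1 ≤ (n : ℝ) / 2 ^ κ := by have := hρl κ hκ; linarith
      set ρ := (n : ℝ) / 2 ^ κ with hρ
      rw [toLattice_cell]
      obtain ⟨hm1, _, _⟩ := mean_bd n M κ (by omega) hnM q hq hρ1 _ rfl
      rw [← hρ] at hm1
      have hb1 : |(#{y ∈ grid d n | cell (2 ^ κ) n y = q} : ℝ) - ρ ^ d| ≤ d * (2 * ρ) ^ (d - 1) := by
        rw [grid_cell_card]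
        push_cast
        refine (prod_bd _ ρ hρ1 ?_).1
        intro i
        have := cnt_bd (2 ^ κ) n (q i) (by omega) (mem_Bx.1 hq i)
        push_cast at this
        exact this
      have hsum : |(#(S ∩ Bc d M (2 ^ κ) q) : ℝ) - #{y ∈ grid d n | cell (2 ^ κ) n y = q}| ≤
          ρ ^ (d - 1) + d * (2 * ρ) ^ (d - 1) + d * (2 * ρ) ^ (d - 1) := by
        have a1 := abs_le.1 hg
        have a2 := abs_le.1 hm1
        have a3 := abs_le.1 hb1
        rw [abs_le]
        constructor <;> linarith [a1.1, a1.2, a2.1, a2.2, a3.1, a3.2]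
      refine hsum.trans (le_of_eq ?_)
      have hρe : ρ = 2 ^ (k - κ) * ((n : ℝ) / 2 ^ k) := by
        rw [hρ]
        have : (2 : ℝ) ^ k = 2 ^ (k - κ) * 2 ^ κ := by rw [← pow_add]; congr 1; omega
        rw [this]; field_simp
      have hρp : ρ ^ (d - 1) = (2 ^ (d - 1)) ^ (k - κ) * ((n : ℝ) / 2 ^ k) ^ (d - 1) := by
        rw [hρe, mul_pow, ← pow_mul, ← pow_mul, mul_comm (k - κ)]
      have h2d : (2 : ℝ) ^ d = 2 * 2 ^ (d - 1) := by
        rw [← pow_succ']; congr 1; omega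
      rw [mul_pow, hρp, h2d]
      ring
    · set l := (n : ℝ) / 2 ^ k with hldef
      have hhalf : (l / 2) ^ d ≤ (l - 1) ^ d := by gcongr; linarith
      refine le_trans ?_ hhalf
      have hkl : Acst d * k ≤ l := le_trans (by have : 0 ≤ Acst d := by linarith
                                                gcongr) hl
      have hlpow : l ^ d = l * l ^ (d - 1) := by rw [← pow_succ']; congr 1; omega
      rw [div_pow l 2 d, le_div_iff₀ (by positivity), hlpow]
      calc _ = Acst d * k * l ^ (d - 1) := by
            unfold Acst
            have : (4 : ℝ) ^ d = 2 ^ d * 2 ^ d := by rw [← mul_pow]; norm_num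
            rw [this, pow_succ 2 d]; ring
        _ ≤ _ := by gcongr
  have hncard : ({S : Config d (M : ℤ) (n ^ d) |
      ¬ Fleast d n (toLattice S.1) ≤ d * (4 * ((n : ℝ) / 2 ^ k) + 1)}.ncard) ≤ #bad := by
    rw [← Set.ncard_image_of_injective _ Subtype.val_injective, ← Set.ncard_coe_finset bad]
    exact Set.ncard_le_ncard hsub (Finset.finite_toSet _)
  have hbadcard : (#bad : ℝ) ≤ ((M ^ d).choose (n ^ d) : ℝ) * (2 / (n : ℝ) ^ 2) := by
    set T : ℝ := ((M ^ d).choose (n ^ d) : ℝ) * (2 / (n : ℝ) ^ (d + 3)) with hT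
    have hT0 : 0 ≤ T := by positivity
    have h1 : (#bad : ℝ) ≤ ∑ κ ∈ range (k + 1), ∑ q ∈ Bx d (2 ^ κ),
        (#{S ∈ powersetCard (n ^ d) (univ : Finset (gridPt d (M : ℤ))) | P κ q S} : ℝ) := by
      have : #bad ≤ ∑ κ ∈ range (k + 1), ∑ q ∈ Bx d (2 ^ κ),
        #{S ∈ powersetCard (n ^ d) (univ : Finset (gridPt d (M : ℤ))) | P κ q S} := by
        refine card_biUnion_le.trans (sum_le_sum ?_)
        intro κ _
        exact card_biUnion_le
      exact_mod_cast this
    refine h1.trans ?_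
    have h2 : ∀ κ ∈ range (k + 1), ∑ q ∈ Bx d (2 ^ κ),
        (#{S ∈ powersetCard (n ^ d) (univ : Finset (gridPt d (M : ℤ))) | P κ q S} : ℝ) ≤
        (n : ℝ) ^ d * T := by
      intro κ hκ
      have hκ : κ ≤ k := by have := mem_range.1 hκ; omega
      have : ∀ q ∈ Bx d (2 ^ κ),
        (#{S ∈ powersetCard (n ^ d) (univ : Finset (gridPt d (M : ℤ))) | P κ q S} : ℝ) ≤ T := by
        intro q hq
        have := box_prob hd n M κ hn hnM (hl.trans (hρl κ hκ)) q hq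
        convert this using 2
      refine (sum_le_sum this).trans ?_
      rw [sum_const, nsmul_eq_mul]
      have hc : #(Bx d (2 ^ κ)) ≤ n ^ d := by
        simp only [Bx, Fintype.card_piFinset_const, card_range]
        apply Nat.pow_le_pow_left
        exact le_trans (Nat.pow_le_pow_right (by norm_num) hκ) hkn'
      have hc' : (#(Bx d (2 ^ κ)) : ℝ) ≤ (n : ℝ) ^ d := by exact_mod_cast hc
      gcongr
    refine (sum_le_sum h2).trans ?_
    rw [sum_const, nsmul_eq_mul, card_range]
    have hk1 : ((k + 1 : ℕ) : ℝ) ≤ n := by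
      have : k < 2 ^ k := Nat.lt_two_pow_self
      exact_mod_cast (by omega : k + 1 ≤ n)
    calc _ ≤ (n : ℝ) * ((n : ℝ) ^ d * T) := by gcongr
      _ = _ := by
        rw [hT, pow_add, show (n : ℝ) ^ 3 = n * n ^ 2 by ring]
        field_simp
  exact le_trans (by exact_mod_cast hncard) hbadcard

lemma main_ev {d : ℕ} (hd : 4 ≤ d) : ∃ n0 : ℕ, 2 ≤ n0 ∧ ∀ n ≥ n0, ∀ M : ℕ, n ≤ M →
    ({S : Config d (M : ℤ) (n ^ d) |
      ¬ Fleast d n (toLattice S.1) ≤ d * (8 * Acst d + 1) * Real.logb 2 n}.ncard : ℝ) ≤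
      ((M ^ d).choose (n ^ d) : ℝ) * (2 / (n : ℝ) ^ 2) := by
  obtain ⟨hA1, hA2⟩ := Acst_ge hd
  have hA0 : 0 < Acst d := by have := Nat.cast_nonneg (α := ℝ) d; linarith
  have hev : ∀ᶠ n : ℕ in Filter.atTop, Acst d * Real.logb 2 n ≤ n := by
    have h1 : (fun x : ℝ => Real.log x) =o[Filter.atTop] (fun x : ℝ => x) := Real.isLittleO_log_id_atTop
    have h2 := h1.def (show 0 < Real.log 2 / Acst d by have := Real.log_pos (show (1 : ℝ) < 2 by norm_num)
                                                       positivity)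
    have h3 := tendsto_natCast_atTop_atTop (R := ℝ) |>.eventually h2
    filter_upwards [h3, Filter.eventually_ge_atTop 1] with n hn hn1
    have hn1 : (1 : ℝ) ≤ n := by exact_mod_cast hn1
    have hl2 := Real.log_pos (show (1 : ℝ) < 2 by norm_num)
    rw [Real.norm_of_nonneg (Real.log_nonneg hn1), Real.norm_of_nonneg (by linarith)] at hn
    rw [Real.logb]
    calc Acst d * (Real.log n / Real.log 2) ≤ Acst d * (Real.log 2 / Acst d * n / Real.log 2) := by gcongr
      _ = n := by field_simp
  obtain ⟨n1, hn1⟩ := Filter.eventually_atTop.1 hev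
  refine ⟨max 2 n1, le_max_left _ _, ?_⟩
  intro n hn M hnM
  have hn2 : 2 ≤ n := le_trans (le_max_left _ _) hn
  have hb := hn1 n (le_trans (le_max_right _ _) hn)
  have hnr : (2 : ℝ) ≤ n := by exact_mod_cast hn2
  have hL1 : 1 ≤ Real.logb 2 n := by
    rw [Real.le_logb_iff_rpow_le (by norm_num) (by linarith)]; simpa using hnr
  have hAL : 0 < Acst d * Real.logb 2 n := by positivity
  obtain ⟨k, hk1, hk2⟩ := exists_nat_pow_near (show (1 : ℝ) ≤ n / (Acst d * Real.logb 2 n) by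
    rw [le_div_iff₀ hAL]; linarith) (show (1 : ℝ) < 2 by norm_num)
  have hK : (0 : ℝ) < 2 ^ k := by positivity
  have hl : Acst d * Real.logb 2 n ≤ (n : ℝ) / 2 ^ k := by
    rw [le_div_iff₀ hAL] at hk1
    rw [le_div_iff₀ hK]; linarith
  have hu : (n : ℝ) / 2 ^ k ≤ 2 * (Acst d * Real.logb 2 n) := by
    rw [div_lt_iff₀ hAL, pow_succ] at hk2
    rw [div_le_iff₀ hK]; linarith
  refine le_trans (Nat.cast_le.2 (Set.ncard_le_ncard ?_ (Set.toFinite _)))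
    (main_count hd n M k hn2 hnM hl)
  intro S hS hF
  apply hS
  refine hF.trans ?_
  rw [mul_assoc]
  gcongr
  nlinarith

/-- (The uniform product measure on the sequence space `𝒢_{(c_n)}` is characterised by
its values on cylinders: for every finite set `J` of coordinates and all events `A n`,
its value on `{ω | ∀ n ∈ J, ω n ∈ A n}` is `∏_{n ∈ J} |A n| / |Config n|`.)
For `d ≥ 4` and `c_n ≥ (1 + 2^(d+5)/log₂ n)^(1/d)` (n ≥ 2), a random sequence `(S_n)`
in `𝒢_{(c_n)}` almost surely satisfies `limsup_n F_n(S_n)/log₂ n < ∞`. -/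
theorem stmt_0 (d : ℕ) (hd : 4 ≤ d) (c : ℕ → ℝ) (hc1 : 1 ≤ c 1)
    (hc : ∀ n : ℕ, 2 ≤ n →
      ((1 : ℝ) + 2 ^ (d + 5) / Real.logb 2 n) ^ ((d : ℝ)⁻¹) ≤ c n)
    (μ : Measure (∀ n : ℕ, Config d ⌊c n * n⌋ (n ^ d)))
    (hμ : ∀ (J : Finset ℕ) (A : ∀ n : ℕ, Set (Config d ⌊c n * n⌋ (n ^ d))),
      μ {ω | ∀ n ∈ J, ω n ∈ A n} =
        ∏ n ∈ J, (Set.ncard (A n) : ENNReal) /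
          (Fintype.card (Config d ⌊c n * n⌋ (n ^ d)) : ENNReal)) :
    μ {ω | Filter.limsup
        (fun n : ℕ => ((Fleast d n (toLattice (ω n).1) / Real.logb 2 n : ℝ) : EReal))
        Filter.atTop < (⊤ : EReal)} = 1 := by
  obtain ⟨n0, hn0, hmain⟩ := main_ev hd
  set C : ℝ := d * (8 * Acst d + 1) with hC
  have hm : ∀ n : ℕ, 2 ≤ n → (n : ℤ) ≤ ⌊c n * n⌋ := by
    intro n hn
    rw [Int.le_floor]
    have hnr : (2 : ℝ) ≤ n := by exact_mod_cast hn
    have hL0 : 0 ≤ Real.logb 2 n := Real.logb_nonneg (by norm_num) (by linarith)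
    have h1 : 1 ≤ c n := by
      refine le_trans (Real.one_le_rpow ?_ (by positivity)) (hc n hn)
      have : (0 : ℝ) ≤ 2 ^ (d + 5) / Real.logb 2 n := by positivity
      linarith
    push_cast
    nlinarith
  set A : ∀ n : ℕ, Set (Config d ⌊c n * n⌋ (n ^ d)) := fun n =>
    {S | ¬ Fleast d n (toLattice S.1) ≤ C * Real.logb 2 n} with hA
  have hprob : ∀ n ≥ n0, μ {ω | ω n ∈ A n} ≤ ENNReal.ofReal (2 / (n : ℝ) ^ 2) := by
    intro n hn
    have hn2 : 2 ≤ n := by omega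
    have h1 := hμ {n} A
    simp only [Finset.mem_singleton, forall_eq, Finset.prod_singleton] at h1
    rw [h1]
    have key : ∀ m : ℤ, (n : ℤ) ≤ m →
        (Set.ncard {S : Config d m (n ^ d) | ¬ Fleast d n (toLattice S.1) ≤ C * Real.logb 2 n} : ENNReal) /
          (Fintype.card (Config d m (n ^ d)) : ENNReal) ≤ ENNReal.ofReal (2 / (n : ℝ) ^ 2) := by
      intro m hm
      obtain ⟨M, rfl⟩ : ∃ M : ℕ, m = M := ⟨m.toNat, by omega⟩
      have hnM : n ≤ M := by exact_mod_cast hm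
      have h2 := hmain n hn M hnM
      have hcard : Fintype.card (Config d (M : ℤ) (n ^ d)) = (M ^ d).choose (n ^ d) := by
        rw [← card_gridPt d M]
        exact Fintype.card_finset_len _
      rw [hcard]
      apply ENNReal.div_le_of_le_mul
      rw [← ENNReal.ofReal_natCast, ← ENNReal.ofReal_natCast, ← ENNReal.ofReal_mul (by positivity)]
      apply ENNReal.ofReal_le_ofReal
      rw [mul_comm (2 / (n : ℝ) ^ 2)]
      exact h2
    exact key _ (hm n hn2)
  set E : ℕ → Set (∀ n : ℕ, Config d ⌊c n * n⌋ (n ^ d)) := fun n =>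
    {ω | n0 ≤ n ∧ ω n ∈ A n} with hE
  have hEle : ∀ n, μ (E n) ≤ ENNReal.ofReal (2 / (n : ℝ) ^ 2) := by
    intro n
    by_cases hn : n0 ≤ n
    · refine (measure_mono ?_).trans (hprob n hn)
      intro ω hω
      exact hω.2
    · have : E n = ∅ := by
        ext ω; simp only [hE, Set.mem_ofPred_eq, Set.mem_empty_iff_false, iff_false]
        intro h; exact hn h.1
      rw [this]; simp
  have hsum : ∑' n, μ (E n) ≠ ⊤ := by
    have hs : Summable (fun n : ℕ => 2 / (n : ℝ) ^ 2) := by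
      have := (Real.summable_one_div_nat_pow (p := 2)).2 (by norm_num)
      simpa [mul_div_assoc, div_eq_mul_inv] using this.mul_left 2
    exact ne_top_of_le_ne_top hs.tsum_ofReal_ne_top (ENNReal.tsum_le_tsum hEle)
  have hlim := measure_limsup_atTop_eq_zero hsum
  have huniv : μ Set.univ = 1 := by
    have := hμ ∅ A
    simpa using this
  rw [← huniv]
  apply measure_congr
  rw [Filter.eventuallyEq_univ, mem_ae_iff]
  refine measure_mono_null ?_ hlim
  intro ω hω
  by_contra hnot
  apply hω
  rw [Set.mem_ofPred_eq]
  rw [Filter.limsup_eq_iInf_iSup_of_nat] at hnot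
  simp only [Set.iInf_eq_iInter, Set.iSup_eq_iUnion, Set.mem_iInter, Set.mem_iUnion, not_forall,
    not_exists] at hnot
  obtain ⟨N, hN⟩ := hnot
  have hbd : Filter.limsup
        (fun n : ℕ => ((Fleast d n (toLattice (ω n).1) / Real.logb 2 n : ℝ) : EReal))
        Filter.atTop ≤ (C : EReal) := by
    apply Filter.limsup_le_of_le
    · isBoundedDefault
    filter_upwards [Filter.eventually_ge_atTop N, Filter.eventually_ge_atTop n0] with n hn1 hn2
    have h1 := hN n hn1
    have h2 : Fleast d n (toLattice (ω n).1) ≤ C * Real.logb 2 n := by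
      by_contra hcon
      exact h1 ⟨hn2, hcon⟩
    have hL : 0 < Real.logb 2 n := Real.logb_pos (by norm_num) (by exact_mod_cast (by omega : 1 < n))
    rw [EReal.coe_le_coe_iff, div_le_iff₀ hL]
    exact h2
  exact lt_of_le_of_lt hbd (EReal.coe_lt_top C)
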